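/- Let R be an SMLL net and let R̂ be its closure: the net obtained by cutting each conclusion A of R containing an occurrence of ⊥ against the main conclusion of the net R°(A⊥), where R°(A) is defined by induction on A by: R°(1) is a one-link; R°(γ) for γ ∈ {⊥, X, X⊥} is an axiom link of conclusions γ⊥, γ with main conclusion γ; and R°(A₁⊗A₂) (resp. R°(A₁⅋A₂)) joins the main conclusions of R°(A₁) and R°(A₂) by a ⊗-link (resp. ⅋-link). Then the SIAM machine M_R is deadlock-free if and only if M_{R̂} is deadlock-free. -/

import Mathlib

/-! # SMLL: multiplicative linear logic with synchronization

Formalization of the proof-structures, correctness criterion, reduction and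
multi-token machine (SIAM) of Dal Lago, Faggian, Hasuo, Yoshimizu,
"The Geometry of Synchronization". -/

/-- SMLL formulas (in negation normal form):
`A ::= 1 | ⊥ | X | X⊥ | A ⊗ A | A ⅋ A`. -/
inductive Formula : Type
  | one : Formula
  | bot : Formula
  | var : ℕ → Formula
  | covar : ℕ → Formula
  | tens : Formula → Formula → Formula
  | parr : Formula → Formula → Formula
  deriving DecidableEq

namespace Formula

/-- Linear negation. -/
def dual : Formula → Formula
  | one => bot
  | bot => one
  | var n => covar n
  | covar n => var n
  | tens A B => parr A.dual B.dual
  | parr A B => tens A.dual B.dual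

/-- Positive formulas: `P ::= 1 | P ⊗ P`. -/
inductive Positive : Formula → Prop
  | one : Positive one
  | tens {A B : Formula} : Positive A → Positive B → Positive (tens A B)

/-- Negative formulas: `N ::= ⊥ | N ⅋ N`. -/
inductive Negative : Formula → Prop
  | bot : Negative bot
  | parr {A B : Formula} : Negative A → Negative B → Negative (parr A B)

/-- A formula is polarized when it is positive or negative. -/
def Polarized (A : Formula) : Prop := Positive A ∨ Negative A

/-- Whether `⊥` occurs in a formula. -/
def hasBotB : Formula → Bool
  | one => false
  | bot => true
  | var _ => false
  | covar _ => false
  | tens A B => hasBotB A || hasBotB B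
  | parr A B => hasBotB A || hasBotB B

/-- Addresses of occurrences inside a formula: `false` = left, `true` = right. -/
abbrev Addr := List Bool

/-- Subformula at a given address (if the address is meaningful). -/
def sub : Formula → Addr → Option Formula
  | A, [] => some A
  | tens A _, false :: m => sub A m
  | tens _ B, true :: m => sub B m
  | parr A _, false :: m => sub A m
  | parr _ B, true :: m => sub B m
  | _, _ :: _ => none

def IsAtom : Formula → Prop
  | one => True
  | bot => True
  | var _ => True
  | covar _ => True
  | tens _ _ => False
  | parr _ _ => False

/-- `m` is the address of an occurrence of an atom in `A`. -/
def AtomOcc (A : Formula) (m : Addr) : Prop := ∃ a, sub A m = some a ∧ IsAtom a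

/-- The atom occurrence at `m` in `A` is positive (it is `1` or `X`). -/
def PosOcc (A : Formula) (m : Addr) : Prop :=
  ∃ a, sub A m = some a ∧ (a = one ∨ ∃ n, a = var n)

/-- The atom occurrence at `m` in `A` is negative (it is `⊥` or `X⊥`). -/
def NegOcc (A : Formula) (m : Addr) : Prop :=
  ∃ a, sub A m = some a ∧ (a = bot ∨ ∃ n, a = covar n)

theorem NegOcc.atomOcc {A : Formula} {m : Addr} (h : NegOcc A m) : AtomOcc A m := by
  obtain ⟨a, ha, h⟩ := h
  refine ⟨a, ha, ?_⟩
  rcases h with rfl | ⟨n, rfl⟩ <;> trivial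

theorem PosOcc.atomOcc {A : Formula} {m : Addr} (h : PosOcc A m) : AtomOcc A m := by
  obtain ⟨a, ha, h⟩ := h
  refine ⟨a, ha, ?_⟩
  rcases h with rfl | ⟨n, rfl⟩ <;> trivial

end Formula

/-- The sorts of links of an SMLL structure. -/
inductive LinkSort : Type
  | ax | cut | tens | parr | one | bot | sync
  deriving DecidableEq

/-- An SMLL proof-structure (with boxes): a finite directed multigraph whose
edges are typed by formulas and whose nodes are links.  Every edge is the
conclusion of exactly one link (its `src`); it is the premiss of the link
`tgt`, if any (edges with no target are the conclusions of the structure).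
`pIdx` indexes an edge among the premisses of its target (for `⊗`/`⅋`-links:
`0` = left, `1` = right; for sync links it pairs premisses with conclusions);
`cIdx` indexes an edge among the conclusions of its source (for sync links,
the `i`-th conclusion corresponds to the `i`-th premiss).  Each `bot`-link is
the lock of a box; `box n` is the innermost box containing the node `n` and
`boxes n` is the set of all boxes containing `n`. -/
structure Struct : Type 1 where
  Edge : Type
  Node : Type
  edgeFintype : Fintype Edge
  nodeFintype : Fintype Node
  edgeDecEq : DecidableEq Edge
  nodeDecEq : DecidableEq Node
  typ : Edge → Formula
  sort : Node → LinkSort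
  src : Edge → Node
  tgt : Edge → Option Node
  pIdx : Edge → ℕ
  cIdx : Edge → ℕ
  box : Node → Option Node
  boxes : Node → Finset Node

attribute [instance] Struct.edgeFintype Struct.nodeFintype
attribute [instance] Struct.edgeDecEq Struct.nodeDecEq

namespace Struct

variable (S : Struct)

/-- The conclusions of a link. -/
def concls (n : S.Node) : Finset S.Edge := Finset.univ.filter fun e => S.src e = n

/-- The premisses of a link. -/
def prems (n : S.Node) : Finset S.Edge := Finset.univ.filter fun e => S.tgt e = some n

/-- The conclusions of the structure. -/
def IsConcl (e : S.Edge) : Prop := S.tgt e = none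

/-- Well-formedness of an SMLL structure: the constraints that the sort of a
link induces on the number and the types of its premisses and conclusions,
together with the coherence of the nesting of boxes. -/
def WF : Prop :=
  (∀ n, S.sort n = .ax → S.prems n = ∅ ∧
    ∃ e f, e ≠ f ∧ S.concls n = {e, f} ∧ S.typ f = (S.typ e).dual) ∧
  (∀ n, S.sort n = .cut → S.concls n = ∅ ∧
    ∃ e f, e ≠ f ∧ S.prems n = {e, f} ∧ S.typ f = (S.typ e).dual) ∧
  (∀ n, S.sort n = .tens → ∃ e f g, e ≠ f ∧ S.prems n = {e, f} ∧
    S.pIdx e = 0 ∧ S.pIdx f = 1 ∧ S.concls n = {g} ∧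
    S.typ g = .tens (S.typ e) (S.typ f)) ∧
  (∀ n, S.sort n = .parr → ∃ e f g, e ≠ f ∧ S.prems n = {e, f} ∧
    S.pIdx e = 0 ∧ S.pIdx f = 1 ∧ S.concls n = {g} ∧
    S.typ g = .parr (S.typ e) (S.typ f)) ∧
  (∀ n, S.sort n = .one → S.prems n = ∅ ∧ ∃ e, S.concls n = {e} ∧ S.typ e = .one) ∧
  (∀ n, S.sort n = .bot → S.prems n = ∅ ∧ ∃ e, S.concls n = {e} ∧ S.typ e = .bot) ∧
  (∀ n, S.sort n = .sync →
    (∀ e ∈ S.prems n, (S.typ e).Polarized) ∧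
    (∀ e ∈ S.prems n, ∃! f, f ∈ S.concls n ∧ S.cIdx f = S.pIdx e) ∧
    (∀ f ∈ S.concls n, ∃! e, e ∈ S.prems n ∧ S.pIdx e = S.cIdx f) ∧
    (∀ e ∈ S.prems n, ∀ f ∈ S.concls n, S.cIdx f = S.pIdx e → S.typ f = S.typ e)) ∧
  (∀ n b, b ∈ S.boxes n → S.sort b = .bot) ∧
  (∀ n, S.box n = none → S.boxes n = ∅) ∧
  (∀ n b, S.box n = some b → b ∉ S.boxes b ∧ S.boxes n = insert b (S.boxes b)) ∧
  (∀ e n, S.tgt e = some n → S.boxes n ⊆ S.boxes (S.src e))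

/-- `b` is the representative of the node `m` in the level-`ℓ` graph (the
graph in which each box strictly below level `ℓ` is collapsed to a single
box-node, identified with its `bot`-link).  For `ℓ = none` this is the
`0`-graph. -/
def RepAt (ℓ : Option S.Node) (m b : S.Node) : Prop :=
  (S.box m = ℓ ∧ b = m) ∨ (b ∈ S.boxes m ∧ S.box b = ℓ)

/-- Edge `e` joins the nodes `u` and `v` (undirectedly) in the level-`ℓ` graph. -/
def ConnectsAt (ℓ : Option S.Node) (e : S.Edge) (u v : S.Node) : Prop :=
  ∃ t, S.tgt e = some t ∧ (S.box t = ℓ ∨ S.box (S.src e) = ℓ) ∧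
    ((S.RepAt ℓ (S.src e) u ∧ S.RepAt ℓ t v) ∨
     (S.RepAt ℓ (S.src e) v ∧ S.RepAt ℓ t u))

/-- The out-edges of a sync link are its positive conclusions and its negative
premisses. -/
def OutEdgeOf (l : S.Node) (e : S.Edge) : Prop :=
  S.sort l = .sync ∧
  ((S.src e = l ∧ (S.typ e).Positive) ∨ (S.tgt e = some l ∧ (S.typ e).Negative))

/-- There is a switching cycle in the level-`ℓ` graph: a cyclic undirected
simple path which uses at most one of the two premisses of each `⅋`-link and
at most one out-edge of each sync link. -/
def SwitchingCycleAt (ℓ : Option S.Node) : Prop :=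
  ∃ (k : ℕ) (v : Fin (k + 1) → S.Node) (e : Fin (k + 1) → S.Edge),
    Function.Injective v ∧ Function.Injective e ∧
    (∀ i, S.ConnectsAt ℓ (e i) (v i) (v (i + 1))) ∧
    (∀ p, S.sort p = .parr → Set.Subsingleton {i | S.tgt (e i) = some p}) ∧
    (∀ l, S.sort l = .sync → Set.Subsingleton {i | S.OutEdgeOf l (e i)})

/-- Correctness criterion: no switching cycle in the `0`-graph, and,
recursively, no switching cycle in the graph of the content of any box. -/
def Correct : Prop := ∀ ℓ : Option S.Node, ¬ S.SwitchingCycleAt ℓ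

/-- A net is a well-formed correct structure. -/
def IsNet : Prop := S.WF ∧ S.Correct

/-! ## Sync paths and hereditary conclusions -/

/-- One step of a sync path: entering a sync link on a premiss and coming out
on the corresponding conclusion. -/
def SyncStepE (e f : S.Edge) : Prop :=
  ∃ l, S.sort l = .sync ∧ S.tgt e = some l ∧ S.src f = l ∧ S.cIdx f = S.pIdx e

/-- `e` is a hereditary conclusion of the link `l`: there is a sync path from
a conclusion of `l` to `e`. -/
def HereditaryConcl (l : S.Node) (e : S.Edge) : Prop :=
  ∃ f, S.src f = l ∧ Relation.ReflTransGen S.SyncStepE f e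

/-- The edge emerges from a box: its source is a `bot`-link (the edge is the
lock of a box) or lies inside some box. -/
def FromBox (e : S.Edge) : Prop := S.sort (S.src e) = .bot ∨ S.box (S.src e) ≠ none

/-- `e` is a hereditary conclusion of a box. -/
def HereditaryBoxConcl (e : S.Edge) : Prop :=
  ∃ f, S.FromBox f ∧ Relation.ReflTransGen S.SyncStepE f e

/-- A ready cut: a cut at depth 0 neither of whose premisses is a hereditary
conclusion of a box. -/
def ReadyCut (c : S.Node) : Prop :=
  S.sort c = .cut ∧ S.box c = none ∧ ∀ e ∈ S.prems c, ¬ S.HereditaryBoxConcl e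

/-! ## Polarized paths and the order on links -/

/-- A node is polarized when all of its conclusions are polarized. -/
def PolarizedNode (n : S.Node) : Prop := ∀ e ∈ S.concls n, (S.typ e).Polarized

/-- A single step of a polarized path from link `a` to link `b` along the
polarized edge `e`: downwards on positive edges, upwards on negative edges,
connecting polarized nodes and never entering boxes. -/
def PolStep (e : S.Edge) (a b : S.Node) : Prop :=
  S.box a = none ∧ S.box b = none ∧ S.PolarizedNode a ∧ S.PolarizedNode b ∧
  (((S.typ e).Positive ∧ S.src e = a ∧ S.tgt e = some b) ∨
   ((S.typ e).Negative ∧ S.tgt e = some a ∧ S.src e = b))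

/-- `a ≺ b` : there is a (simple) polarized path from `a` to `b`. -/
def prec (a b : S.Node) : Prop :=
  ∃ (k : ℕ) (v : Fin (k + 2) → S.Node) (e : Fin (k + 1) → S.Edge),
    v 0 = a ∧ v (Fin.last _) = b ∧
    Function.Injective v ∧ Function.Injective e ∧
    ∀ i : Fin (k + 1), S.PolStep (e i) (v i.castSucc) (v i.succ)

/-- SMLL⁰ structures: no unit links (hence no boxes). -/
def UnitFree : Prop := ∀ n : S.Node, S.sort n ≠ .one ∧ S.sort n ≠ .bot

/-- Closed structures: no `⊥` occurs in the conclusions. -/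
def Closed : Prop := ∀ e : S.Edge, S.tgt e = none → (S.typ e).hasBotB = false

end Struct

/-! ## Reduction -/

/-- A partial injection `j` whose (some-)range is exactly `X`. -/
def PInjOnto {α β : Type*} (j : α → Option β) (X : Set β) : Prop :=
  (∀ a a' b, j a = some b → j a' = some b → a = a') ∧
  (∀ a b, j a = some b → b ∈ X) ∧
  (∀ b ∈ X, ∃ a, j a = some b)

/-- `j` is total. -/
def JTotal {α β : Type*} (j : α → Option β) : Prop := ∀ a, j a ≠ none

/-- The structures `Q` and `R` agree, along the correspondences `jN`, `jE`,
on all edges outside `XE` and all nodes outside `XN`. -/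
def AgreesOn (Q R : Struct) (jN : Q.Node → Option R.Node)
    (jE : Q.Edge → Option R.Edge) (XE : Set R.Edge) (XN : Set R.Node) : Prop :=
  (∀ x y, jE x = some y → y ∉ XE →
    Q.typ x = R.typ y ∧ jN (Q.src x) = some (R.src y) ∧
    (Q.tgt x).bind jN = R.tgt y ∧ Q.pIdx x = R.pIdx y ∧ Q.cIdx x = R.cIdx y) ∧
  (∀ n m, jN n = some m → m ∉ XN →
    Q.sort n = R.sort m ∧ (Q.box n).bind jN = R.box m ∧
    (∀ b b', jN b = some b' → (b ∈ Q.boxes n ↔ b' ∈ R.boxes m)))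

/-- The `ax/cut` step: a cut between a conclusion `v` of an axiom `a` and the
dual premiss is removed together with the axiom; the remaining conclusion `u`
of the axiom and the remaining premiss `q` of the cut are merged. -/
def AxCutStep (R Q : Struct) : Prop :=
  ∃ (a c : R.Node) (v u q : R.Edge),
    R.sort a = .ax ∧ R.sort c = .cut ∧ R.box a = none ∧ R.box c = none ∧
    v ≠ u ∧ v ≠ q ∧ u ≠ q ∧
    R.concls a = {v, u} ∧ R.prems c = {v, q} ∧
    ∃ (jN : Q.Node → Option R.Node) (jE : Q.Edge → Option R.Edge),
      JTotal jN ∧ JTotal jE ∧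
      PInjOnto jN {n | n ≠ a ∧ n ≠ c} ∧
      PInjOnto jE {x | x ≠ v ∧ x ≠ u} ∧
      AgreesOn Q R jN jE {q} ∅ ∧
      (∀ x, jE x = some q →
        Q.typ x = R.typ q ∧ jN (Q.src x) = some (R.src q) ∧
        (Q.tgt x).bind jN = R.tgt u ∧ Q.pIdx x = R.pIdx u ∧ Q.cIdx x = R.cIdx q)

/-- The `⊗/⅋` step: a cut between `A ⊗ B` and `A⊥ ⅋ B⊥` is replaced by two
cuts between the respective premisses. -/
def TensParrStep (R Q : Struct) : Prop :=
  ∃ (c t p : R.Node) (s s' a1 a2 b1 b2 : R.Edge),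
    R.sort c = .cut ∧ R.sort t = .tens ∧ R.sort p = .parr ∧
    R.box c = none ∧ R.box t = none ∧ R.box p = none ∧
    s ≠ s' ∧ R.prems c = {s, s'} ∧ R.concls t = {s} ∧ R.concls p = {s'} ∧
    a1 ≠ a2 ∧ R.prems t = {a1, a2} ∧ R.pIdx a1 = 0 ∧ R.pIdx a2 = 1 ∧
    b1 ≠ b2 ∧ R.prems p = {b1, b2} ∧ R.pIdx b1 = 0 ∧ R.pIdx b2 = 1 ∧
    ∃ (jN : Q.Node → Option R.Node) (jE : Q.Edge → Option R.Edge) (c' : Q.Node),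
      JTotal jE ∧
      PInjOnto jN {n | n ≠ t ∧ n ≠ p} ∧
      PInjOnto jE {x | x ≠ s ∧ x ≠ s'} ∧
      jN c' = none ∧ (∀ n, jN n = none → n = c') ∧
      Q.sort c' = .cut ∧ Q.box c' = none ∧ Q.boxes c' = ∅ ∧
      AgreesOn Q R jN jE {a1, a2, b1, b2} ∅ ∧
      (∀ x y, jE x = some y → y = a1 ∨ y = b1 →
        Q.typ x = R.typ y ∧ jN (Q.src x) = some (R.src y) ∧
        (Q.tgt x).bind jN = some c ∧ Q.cIdx x = R.cIdx y) ∧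
      (∀ x y, jE x = some y → y = a2 ∨ y = b2 →
        Q.typ x = R.typ y ∧ jN (Q.src x) = some (R.src y) ∧
        Q.tgt x = some c' ∧ Q.cIdx x = R.cIdx y)

/-- Commutation of a sync link with a `⊗` or `⅋` link: the sync link acting
on the conclusion `z` of the multiplicative link `m` (with corresponding sync
conclusion `w`) is pushed above `m`, now acting on the two premisses `x`, `y`
of `m` via two fresh sync positions (indices `i₁`, `i₂`) with fresh edges
`x'`, `y'`. -/
def SyncMultStep (R Q : Struct) : Prop :=
  ∃ (l m : R.Node) (z w x y : R.Edge) (i₁ i₂ : ℕ),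
    R.sort l = .sync ∧ (R.sort m = .tens ∨ R.sort m = .parr) ∧
    R.box l = none ∧ R.box m = none ∧
    R.src z = m ∧ R.tgt z = some l ∧ R.src w = l ∧ R.cIdx w = R.pIdx z ∧
    x ≠ y ∧ R.prems m = {x, y} ∧ R.pIdx x = 0 ∧ R.pIdx y = 1 ∧
    i₁ ≠ i₂ ∧
    (∀ e, R.tgt e = some l → R.pIdx e ≠ i₁ ∧ R.pIdx e ≠ i₂) ∧
    (∀ e, R.src e = l → R.cIdx e ≠ i₁ ∧ R.cIdx e ≠ i₂) ∧
    ∃ (jN : Q.Node → Option R.Node) (jE : Q.Edge → Option R.Edge)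
      (l' m' : Q.Node) (x' y' : Q.Edge),
      JTotal jN ∧ PInjOnto jN Set.univ ∧
      PInjOnto jE {e | e ≠ z} ∧
      jN l' = some l ∧ jN m' = some m ∧
      x' ≠ y' ∧ jE x' = none ∧ jE y' = none ∧ (∀ e, jE e = none → e = x' ∨ e = y') ∧
      AgreesOn Q R jN jE {x, y, w} ∅ ∧
      (∀ e, jE e = some x →
        Q.typ e = R.typ x ∧ jN (Q.src e) = some (R.src x) ∧
        Q.tgt e = some l' ∧ Q.pIdx e = i₁ ∧ Q.cIdx e = R.cIdx x) ∧
      (∀ e, jE e = some y →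
        Q.typ e = R.typ y ∧ jN (Q.src e) = some (R.src y) ∧
        Q.tgt e = some l' ∧ Q.pIdx e = i₂ ∧ Q.cIdx e = R.cIdx y) ∧
      (∀ e, jE e = some w →
        Q.typ e = R.typ w ∧ Q.src e = m' ∧
        (Q.tgt e).bind jN = R.tgt w ∧ Q.pIdx e = R.pIdx w ∧ Q.cIdx e = R.cIdx w) ∧
      (Q.typ x' = R.typ x ∧ Q.src x' = l' ∧ Q.tgt x' = some m' ∧
        Q.pIdx x' = 0 ∧ Q.cIdx x' = i₁) ∧
      (Q.typ y' = R.typ y ∧ Q.src y' = l' ∧ Q.tgt y' = some m' ∧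
        Q.pIdx y' = 1 ∧ Q.cIdx y' = i₂)

/-- Commutation of a sync link with an axiom: a sync link acting on a
positive conclusion `u` of an axiom (with corresponding conclusion `u'`) is
moved to the axiom's other conclusion `v` (of type `P⊥`), with a fresh sync
position of index `j` and fresh edge `v'`. -/
def SyncAxStep (R Q : Struct) : Prop :=
  ∃ (l a : R.Node) (u u' v : R.Edge) (j : ℕ),
    R.sort l = .sync ∧ R.sort a = .ax ∧ R.box l = none ∧ R.box a = none ∧
    (R.typ u).Positive ∧ u ≠ v ∧ R.concls a = {u, v} ∧
    R.tgt u = some l ∧ R.src u' = l ∧ R.cIdx u' = R.pIdx u ∧ u' ≠ u ∧ u' ≠ v ∧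
    (∀ e, R.tgt e = some l → R.pIdx e ≠ j) ∧
    (∀ e, R.src e = l → R.cIdx e ≠ j) ∧
    ∃ (jN : Q.Node → Option R.Node) (jE : Q.Edge → Option R.Edge)
      (l' a' : Q.Node) (v' : Q.Edge),
      JTotal jN ∧ PInjOnto jN Set.univ ∧ PInjOnto jE {e | e ≠ u} ∧
      jN l' = some l ∧ jN a' = some a ∧
      jE v' = none ∧ (∀ e, jE e = none → e = v') ∧
      AgreesOn Q R jN jE {u', v} ∅ ∧
      (∀ e, jE e = some u' →
        Q.typ e = R.typ u' ∧ Q.src e = a' ∧ Q.cIdx e = R.cIdx u ∧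
        (Q.tgt e).bind jN = R.tgt u' ∧ Q.pIdx e = R.pIdx u') ∧
      (∀ e, jE e = some v →
        Q.typ e = R.typ v ∧ Q.src e = a' ∧ Q.cIdx e = R.cIdx v ∧
        Q.tgt e = some l' ∧ Q.pIdx e = j) ∧
      (Q.typ v' = R.typ v ∧ Q.src v' = l' ∧ Q.cIdx v' = j ∧
        (Q.tgt v').bind jN = R.tgt v ∧ Q.pIdx v' = R.pIdx v)

/-- Commutation of a sync link with a cut: a sync link acting on the premiss
`d'` (of negative type `P⊥`) of a cut is moved to the other premiss `q`. -/
def SyncCutStep (R Q : Struct) : Prop :=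
  ∃ (l c : R.Node) (d d' q : R.Edge) (j : ℕ),
    R.sort l = .sync ∧ R.sort c = .cut ∧ R.box l = none ∧ R.box c = none ∧
    (R.typ d').Negative ∧
    R.src d' = l ∧ R.tgt d' = some c ∧ R.tgt d = some l ∧ R.pIdx d = R.cIdx d' ∧
    d' ≠ q ∧ d ≠ q ∧ d ≠ d' ∧ R.prems c = {d', q} ∧
    (∀ e, R.tgt e = some l → R.pIdx e ≠ j) ∧
    (∀ e, R.src e = l → R.cIdx e ≠ j) ∧
    ∃ (jN : Q.Node → Option R.Node) (jE : Q.Edge → Option R.Edge)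
      (l' c' : Q.Node) (q' : Q.Edge),
      JTotal jN ∧ PInjOnto jN Set.univ ∧ PInjOnto jE {e | e ≠ d'} ∧
      jN l' = some l ∧ jN c' = some c ∧
      jE q' = none ∧ (∀ e, jE e = none → e = q') ∧
      AgreesOn Q R jN jE {d, q} ∅ ∧
      (∀ e, jE e = some d →
        Q.typ e = R.typ d ∧ jN (Q.src e) = some (R.src d) ∧ Q.cIdx e = R.cIdx d ∧
        Q.tgt e = some c' ∧ Q.pIdx e = R.pIdx d') ∧
      (∀ e, jE e = some q →
        Q.typ e = R.typ q ∧ jN (Q.src e) = some (R.src q) ∧ Q.cIdx e = R.cIdx q ∧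
        Q.tgt e = some l' ∧ Q.pIdx e = j) ∧
      (Q.typ q' = R.typ q ∧ Q.src q' = l' ∧ Q.cIdx q' = j ∧
        Q.tgt q' = some c' ∧ Q.pIdx q' = R.pIdx q)

/-- Sync elimination: a sync link all of whose premisses are conclusions of
`one`-links is erased, merging each premiss with its corresponding
conclusion. -/
def SyncElimStep (R Q : Struct) : Prop :=
  ∃ l : R.Node, R.sort l = .sync ∧ R.box l = none ∧
    (∀ e ∈ R.prems l, R.sort (R.src e) = .one) ∧
    ∃ (jN : Q.Node → Option R.Node) (jE : Q.Edge → Option R.Edge),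
      JTotal jN ∧ JTotal jE ∧
      PInjOnto jN {n | n ≠ l} ∧
      PInjOnto jE {e | R.src e ≠ l} ∧
      AgreesOn Q R jN jE {e | R.tgt e = some l} ∅ ∧
      (∀ x e f, jE x = some e → R.tgt e = some l → R.src f = l →
        R.cIdx f = R.pIdx e →
        Q.typ x = R.typ e ∧ jN (Q.src x) = some (R.src e) ∧
        (Q.tgt x).bind jN = R.tgt f ∧ Q.pIdx x = R.pIdx f ∧ Q.cIdx x = R.cIdx e)

/-- The `one/⊥` step (box opening): a cut between the conclusion `o` of a
`one`-link `n₁` and the lock `k` of a box `b` removes the cut, the `one`-link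
and the `bot`-link, and opens the box. -/
def OneBotStep (R Q : Struct) : Prop :=
  ∃ (c n₁ b : R.Node) (o k : R.Edge),
    R.sort c = .cut ∧ R.sort n₁ = .one ∧ R.sort b = .bot ∧
    R.box c = none ∧ R.box n₁ = none ∧ R.box b = none ∧
    o ≠ k ∧ R.prems c = {o, k} ∧ R.src o = n₁ ∧ R.src k = b ∧
    ∃ (jN : Q.Node → Option R.Node) (jE : Q.Edge → Option R.Edge),
      JTotal jN ∧ JTotal jE ∧
      PInjOnto jN {n | n ≠ c ∧ n ≠ n₁ ∧ n ≠ b} ∧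
      PInjOnto jE {e | e ≠ o ∧ e ≠ k} ∧
      (∀ x e, jE x = some e →
        Q.typ x = R.typ e ∧ jN (Q.src x) = some (R.src e) ∧
        (Q.tgt x).bind jN = R.tgt e ∧ Q.pIdx x = R.pIdx e ∧ Q.cIdx x = R.cIdx e) ∧
      (∀ n m, jN n = some m →
        Q.sort n = R.sort m ∧
        (∀ b₀ b₀', jN b₀ = some b₀' → (b₀ ∈ Q.boxes n ↔ b₀' ∈ R.boxes m ∧ b₀' ≠ b)) ∧
        (R.box m = some b → Q.box n = none) ∧
        (R.box m ≠ some b → (Q.box n).bind jN = R.box m))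

/-- The sync-commutation and sync-elimination steps. -/
def SyncRed (R Q : Struct) : Prop :=
  SyncMultStep R Q ∨ SyncAxStep R Q ∨ SyncCutStep R Q ∨ SyncElimStep R Q

/-- The reduction relation `→` on SMLL structures (applied at depth 0 only). -/
def Step (R Q : Struct) : Prop :=
  AxCutStep R Q ∨ TensParrStep R Q ∨ SyncRed R Q ∨ OneBotStep R Q

/-- Isomorphism of structures. -/
def Isom (R Q : Struct) : Prop :=
  ∃ (en : R.Node ≃ Q.Node) (ee : R.Edge ≃ Q.Edge),
    (∀ e, Q.typ (ee e) = R.typ e) ∧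
    (∀ e, Q.src (ee e) = en (R.src e)) ∧
    (∀ e, Q.tgt (ee e) = (R.tgt e).map en) ∧
    (∀ e, Q.pIdx (ee e) = R.pIdx e) ∧
    (∀ e, Q.cIdx (ee e) = R.cIdx e) ∧
    (∀ n, Q.sort (en n) = R.sort n) ∧
    (∀ n, Q.box (en n) = (R.box n).map en) ∧
    (∀ n, Q.boxes (en n) = (R.boxes n).image en)

/-! ## The SIAM: a synchronous interaction abstract machine -/

namespace Struct

variable (S : Struct)

/-- The value of a token: either an occurrence of an atom on an edge, or a
position `(e, i)` on the lock `e` of a box (`BOTBOX`). -/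
inductive PosVal (S : Struct) : Type
  | atom : S.Edge → Formula.Addr → PosVal S
  | lock : S.Edge → ℕ → PosVal S

/-- Initial positions: negative atom occurrences in the conclusions. -/
def InitPos (p : S.Edge × Formula.Addr) : Prop :=
  S.tgt p.1 = none ∧ Formula.NegOcc (S.typ p.1) p.2

/-- Final positions: positive atom occurrences in the conclusions. -/
def FinPos (p : S.Edge × Formula.Addr) : Prop :=
  S.tgt p.1 = none ∧ Formula.PosOcc (S.typ p.1) p.2

/-- One positions: conclusions of `one`-links. -/
def OnePos (p : S.Edge × Formula.Addr) : Prop :=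
  S.sort (S.src p.1) = .one ∧ p.2 = []

/-- Valid token values: genuine atom occurrences, or positions on the lock of
a box. -/
def ValidVal : PosVal S → Prop
  | .atom e m => Formula.AtomOcc (S.typ e) m
  | .lock e _ => S.sort (S.src e) = .bot

end Struct

/-- A state of the SIAM machine `M_S`: a (partial) function from
`INIT(S) ∪ L` (with `L ⊆ ONES(S)`) to the positions of `S`; it records, for
each token, its origin and its current position. -/
structure SState (S : Struct) where
  f : S.Edge × Formula.Addr → Option (Struct.PosVal S)
  dom_subset : ∀ p, f p ≠ none → S.InitPos p ∨ S.OnePos p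
  init_total : ∀ p, S.InitPos p → f p ≠ none
  val_valid : ∀ p v, f p = some v → S.ValidVal v

namespace Struct

variable (S : Struct)

/-- The box `b` is unlocked in state `T`: some token sits on its lock. -/
def Unlocked (T : SState S) (b : S.Node) : Prop :=
  ∃ p e i, T.f p = some (.lock e i) ∧ S.src e = b

/-- A link is active: all the boxes containing it are unlocked. -/
def Active (T : SState S) (n : S.Node) : Prop :=
  ∀ b ∈ S.boxes n, S.Unlocked T b

end Struct

open Classical in
/-- The initial state `I_S`: the identity on the initial positions. -/
noncomputable def initState (S : Struct) : SState S where
  f := fun p => if S.InitPos p then some (.atom p.1 p.2) else none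
  dom_subset := by
    intro p hp
    by_cases h : S.InitPos p
    · exact Or.inl h
    · simp [h] at hp
  init_total := by intro p hp; simp [hp]
  val_valid := by
    intro p v hv
    by_cases h : S.InitPos p
    · simp only [if_pos h, Option.some.injEq] at hv
      subst hv
      exact h.2.atomOcc
    · simp [h] at hv

/-- The transition relation of the SIAM.  Tokens on negative atom occurrences
move upwards, tokens on positive atom occurrences move downwards; all tokens
cross a sync link simultaneously, when each of its in-edges is saturated;
active `one`-links may spawn a token; a token reaching the lock of a box
unlocks it.  Tokens may only cross active links (so they can enter a box only
when it is unlocked). -/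
inductive STrans (S : Struct) : SState S → SState S → Prop
  | axUp {T T' : SState S} {p : S.Edge × Formula.Addr} {e e' : S.Edge}
      {m : Formula.Addr} {a : S.Node} :
      T.f p = some (.atom e m) →
      Formula.NegOcc (S.typ e) m →
      S.src e = a → S.sort a = .ax → S.Active T a →
      S.src e' = a → e' ≠ e →
      (∀ q, q ≠ p → T'.f q = T.f q) →
      T'.f p = some (.atom e' m) →
      STrans S T T'
  | cutDown {T T' : SState S} {p : S.Edge × Formula.Addr} {e e' : S.Edge}
      {m : Formula.Addr} {c : S.Node} :
      T.f p = some (.atom e m) →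
      Formula.PosOcc (S.typ e) m →
      S.tgt e = some c → S.sort c = .cut → S.Active T c →
      S.tgt e' = some c → e' ≠ e →
      (∀ q, q ≠ p → T'.f q = T.f q) →
      T'.f p = some (.atom e' m) →
      STrans S T T'
  | multDown {T T' : SState S} {p : S.Edge × Formula.Addr} {e g : S.Edge}
      {m : Formula.Addr} {n : S.Node} {b : Bool} :
      T.f p = some (.atom e m) →
      Formula.PosOcc (S.typ e) m →
      S.tgt e = some n → (S.sort n = .tens ∨ S.sort n = .parr) → S.Active T n →
      S.src g = n →
      S.pIdx e = (if b then 1 else 0) →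
      (∀ q, q ≠ p → T'.f q = T.f q) →
      T'.f p = some (.atom g (b :: m)) →
      STrans S T T'
  | multUp {T T' : SState S} {p : S.Edge × Formula.Addr} {e g : S.Edge}
      {m : Formula.Addr} {n : S.Node} {b : Bool} :
      T.f p = some (.atom g (b :: m)) →
      Formula.NegOcc (S.typ g) (b :: m) →
      S.src g = n → (S.sort n = .tens ∨ S.sort n = .parr) → S.Active T n →
      S.tgt e = some n →
      S.pIdx e = (if b then 1 else 0) →
      (∀ q, q ≠ p → T'.f q = T.f q) →
      T'.f p = some (.atom e m) →
      STrans S T T'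
  | lockTok {T T' : SState S} {p : S.Edge × Formula.Addr} {e : S.Edge}
      {b' : S.Node} :
      T.f p = some (.atom e []) →
      S.typ e = .bot →
      S.src e = b' → S.sort b' = .bot → S.Active T b' →
      (∀ q, q ≠ p → T'.f q = T.f q) →
      T'.f p = some (.lock e 0) →
      STrans S T T'
  | oneSpawn {T T' : SState S} {n : S.Node} {e : S.Edge} :
      S.sort n = .one → S.Active T n → S.src e = n →
      T.f (e, []) = none →
      (∀ q, q ≠ (e, []) → T'.f q = T.f q) →
      T'.f (e, []) = some (.atom e []) →
      STrans S T T'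
  | syncCross {T T' : SState S} {l : S.Node} :
      S.sort l = .sync → S.Active T l →
      (∃ q e m, T.f q = some (.atom e m) ∧
        ((S.tgt e = some l ∧ (S.typ e).Positive) ∨
         (S.src e = l ∧ (S.typ e).Negative))) →
      (∀ e, ((S.tgt e = some l ∧ (S.typ e).Positive) ∨
             (S.src e = l ∧ (S.typ e).Negative)) →
        ∀ m, Formula.AtomOcc (S.typ e) m → ∃ q, T.f q = some (.atom e m)) →
      (∀ q e m, T.f q = some (.atom e m) → S.tgt e = some l → (S.typ e).Positive →
        ∃ e', S.src e' = l ∧ S.cIdx e' = S.pIdx e ∧ T'.f q = some (.atom e' m)) →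
      (∀ q e m, T.f q = some (.atom e m) → S.src e = l → (S.typ e).Negative →
        ∃ e', S.tgt e' = some l ∧ S.pIdx e' = S.cIdx e ∧ T'.f q = some (.atom e' m)) →
      (∀ q, (∀ e m, T.f q = some (.atom e m) →
          ¬(S.tgt e = some l ∧ (S.typ e).Positive) ∧
          ¬(S.src e = l ∧ (S.typ e).Negative)) →
        T'.f q = T.f q) →
      STrans S T T'

/-- A final state: its image consists of all the final positions together
with positions on the locks of boxes. -/
def SState.Final {S : Struct} (T : SState S) : Prop :=
  (∀ q v, T.f q = some v →
    (∃ e m, v = .atom e m ∧ S.FinPos (e, m)) ∨ (∃ e i, v = .lock e i)) ∧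
  (∀ e m, S.FinPos (e, m) → ∃ q, T.f q = some (.atom e m))

/-- The machine of `S` deadlocks: some maximal transition sequence from the
initial state ends in a non-final state. -/
def Deadlocks (S : Struct) : Prop :=
  ∃ T : SState S, Relation.ReflTransGen (STrans S) (initState S) T ∧
    (∀ T', ¬ STrans S T T') ∧ ¬ T.Final

/-- The machine of `S` is deadlock free: every maximal transition sequence
from the initial state ends in a final state. -/
def DeadlockFree (S : Struct) : Prop :=
  ∀ T : SState S, Relation.ReflTransGen (STrans S) (initState S) T →
    (∀ T', ¬ STrans S T T') → T.Final

/-! ## The closure of a net -/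

/-- A structure with a designated (main) conclusion. -/
structure PNet : Type 1 where
  S : Struct
  main : S.Edge

/-- The net consisting of a single `one`-link. -/
def oneNet : PNet where
  S :=
    { Edge := Unit
      Node := Unit
      edgeFintype := inferInstance
      nodeFintype := inferInstance
      edgeDecEq := inferInstance
      nodeDecEq := inferInstance
      typ := fun _ => .one
      sort := fun _ => .one
      src := fun _ => ()
      tgt := fun _ => none
      pIdx := fun _ => 0
      cIdx := fun _ => 0
      box := fun _ => none
      boxes := fun _ => ∅ }
  main := ()

/-- The net consisting of a single axiom of conclusions `A⊥, A`, with main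
conclusion `A`. -/
def axNet (A : Formula) : PNet where
  S :=
    { Edge := Bool
      Node := Unit
      edgeFintype := inferInstance
      nodeFintype := inferInstance
      edgeDecEq := inferInstance
      nodeDecEq := inferInstance
      typ := fun e => if e then A else A.dual
      sort := fun _ => .ax
      src := fun _ => ()
      tgt := fun _ => none
      pIdx := fun _ => 0
      cIdx := fun e => if e then 1 else 0
      box := fun _ => none
      boxes := fun _ => ∅ }
  main := true

/-- Joining the main conclusions of two nets by a binary link of sort `s`
and conclusion type `C`. -/
def joinNet (s : LinkSort) (C : Formula) (P Q : PNet) : PNet where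
  S :=
    { Edge := Option (P.S.Edge ⊕ Q.S.Edge)
      Node := Option (P.S.Node ⊕ Q.S.Node)
      edgeFintype := inferInstance
      nodeFintype := inferInstance
      edgeDecEq := inferInstance
      nodeDecEq := inferInstance
      typ := fun e =>
        match e with
        | none => C
        | some (.inl x) => P.S.typ x
        | some (.inr y) => Q.S.typ y
      sort := fun n =>
        match n with
        | none => s
        | some (.inl x) => P.S.sort x
        | some (.inr y) => Q.S.sort y
      src := fun e =>
        match e with
        | none => none
        | some (.inl x) => some (.inl (P.S.src x))
        | some (.inr y) => some (.inr (Q.S.src y))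
      tgt := fun e =>
        match e with
        | none => none
        | some (.inl x) =>
            if x = P.main then some none
            else (P.S.tgt x).map fun n => some (.inl n)
        | some (.inr y) =>
            if y = Q.main then some none
            else (Q.S.tgt y).map fun n => some (.inr n)
      pIdx := fun e =>
        match e with
        | none => 0
        | some (.inl x) => if x = P.main then 0 else P.S.pIdx x
        | some (.inr y) => if y = Q.main then 1 else Q.S.pIdx y
      cIdx := fun e =>
        match e with
        | none => 0
        | some (.inl x) => P.S.cIdx x
        | some (.inr y) => Q.S.cIdx y
      box := fun n =>
        match n with
        | none => none
        | some (.inl x) => (P.S.box x).map fun m => some (.inl m)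
        | some (.inr y) => (Q.S.box y).map fun m => some (.inr m)
      boxes := fun n =>
        match n with
        | none => ∅
        | some (.inl x) => (P.S.boxes x).image fun m => some (.inl m)
        | some (.inr y) => (Q.S.boxes y).image fun m => some (.inr m) }
  main := none

/-- The net `R°(A)`, by induction on `A`: it has conclusions `Γ, A` with no
occurrence of `⊥` in `Γ`, and main conclusion `A`. -/
def circNet : Formula → PNet
  | .one => oneNet
  | .bot => axNet .bot
  | .var n => axNet (.var n)
  | .covar n => axNet (.covar n)
  | .tens A B => joinNet .tens (.tens A B) (circNet A) (circNet B)
  | .parr A B => joinNet .parr (.parr A B) (circNet A) (circNet B)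

/-- The conclusions of `R` containing an occurrence of `⊥`. -/
abbrev BadC (R : Struct) :=
  {e : R.Edge // R.tgt e = none ∧ (R.typ e).hasBotB = true}

/-- The closure `R̂` of `R`: each conclusion `A` of `R` containing `⊥` is cut
against the main conclusion of a copy of `R°(A⊥)`. -/
def netClosure (R : Struct) : Struct where
  Edge := R.Edge ⊕ Σ e : BadC R, (circNet (R.typ e.val).dual).S.Edge
  Node := R.Node ⊕ ((Σ e : BadC R, (circNet (R.typ e.val).dual).S.Node) ⊕ BadC R)
  edgeFintype := inferInstance
  nodeFintype := inferInstance
  edgeDecEq := inferInstance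
  nodeDecEq := inferInstance
  typ := fun e =>
    match e with
    | .inl e => R.typ e
    | .inr ⟨b, x⟩ => (circNet (R.typ b.val).dual).S.typ x
  sort := fun n =>
    match n with
    | .inl n => R.sort n
    | .inr (.inl ⟨b, x⟩) => (circNet (R.typ b.val).dual).S.sort x
    | .inr (.inr _) => .cut
  src := fun e =>
    match e with
    | .inl e => .inl (R.src e)
    | .inr ⟨b, x⟩ => .inr (.inl ⟨b, (circNet (R.typ b.val).dual).S.src x⟩)
  tgt := fun e =>
    match e with
    | .inl e =>
        if h : R.tgt e = none ∧ (R.typ e).hasBotB = true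
        then some (.inr (.inr ⟨e, h⟩))
        else (R.tgt e).map Sum.inl
    | .inr ⟨b, x⟩ =>
        if x = (circNet (R.typ b.val).dual).main
        then some (.inr (.inr b))
        else ((circNet (R.typ b.val).dual).S.tgt x).map fun n => .inr (.inl ⟨b, n⟩)
  pIdx := fun e =>
    match e with
    | .inl e => R.pIdx e
    | .inr ⟨b, x⟩ =>
        if x = (circNet (R.typ b.val).dual).main then 1
        else (circNet (R.typ b.val).dual).S.pIdx x
  cIdx := fun e =>
    match e with
    | .inl e => R.cIdx e
    | .inr ⟨b, x⟩ => (circNet (R.typ b.val).dual).S.cIdx x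
  box := fun n =>
    match n with
    | .inl n => (R.box n).map Sum.inl
    | .inr (.inl ⟨b, x⟩) =>
        ((circNet (R.typ b.val).dual).S.box x).map fun m => .inr (.inl ⟨b, m⟩)
    | .inr (.inr _) => none
  boxes := fun n =>
    match n with
    | .inl n => (R.boxes n).image Sum.inl
    | .inr (.inl ⟨b, x⟩) =>
        ((circNet (R.typ b.val).dual).S.boxes x).image fun m => .inr (.inl ⟨b, m⟩)
    | .inr (.inr _) => ∅

/-!
The machine of the closure is related to the machine of `R` by a stuttering bisimulation. A token
inside a copy of `R°(A⊥)` sits on an edge labelled by an address of `A`, and is projected to that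
address in the conclusion `A` of `R`. Links of `R` act alike on a token and on its projection.
Links of the copies, and the cuts which attach them, leave the projection in place and decrease the
residual distance of the token to `R` or to a conclusion of the closure. They are neither sync links
nor inside boxes, so nothing ever blocks them, and every state of the closure can be settled: all
tokens outside `R` are brought into `R` or to rest. From a settled state every transition of `R` can
be lifted, and a settled state is final if and only if its projection is.

Conversely a transition of the closure projects to a transition of `R` or to none. For sync links
this requires that distinct tokens never share a position: otherwise the projection of a token still
inside a copy could stand on an in-edge of the link beside that of the token which crosses it.
-/

namespace Formula

theorem sub_nil (A : Formula) : sub A [] = some A := by cases A <;> rfl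

theorem sub_append (A : Formula) (m k : Addr) :
    sub A (m ++ k) = (sub A m).bind fun a => sub a k := by
  induction m generalizing A with
  | nil => simp [sub_nil]
  | cons b m ih => cases A <;> cases b <;> simp [sub, ih]

theorem dual_dual (A : Formula) : A.dual.dual = A := by
  induction A <;> simp_all [dual]

theorem sub_dual (A : Formula) (m : Addr) : sub A.dual m = (sub A m).map dual := by
  induction m generalizing A with
  | nil => simp [sub_nil]
  | cons b m ih => cases A <;> cases b <;> simp [sub, dual, ih]

theorem IsAtom.dual {A : Formula} (h : A.IsAtom) : A.dual.IsAtom := by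
  cases A <;> simp_all [Formula.dual, IsAtom]

theorem IsAtom.eq_nil_of_atomOcc {A : Formula} (h : A.IsAtom) {m : Addr} (hm : A.AtomOcc m) :
    m = [] := by
  obtain ⟨a, ha, -⟩ := hm
  cases m with
  | nil => rfl
  | cons b m => cases A <;> simp_all [sub, IsAtom]

section

variable {A B : Formula} {m k : Addr}

theorem posOcc_congr (h : sub A m = sub B k) : A.PosOcc m ↔ B.PosOcc k := by simp [PosOcc, h]

theorem negOcc_congr (h : sub A m = sub B k) : A.NegOcc m ↔ B.NegOcc k := by simp [NegOcc, h]

theorem atomOcc_congr (h : sub A m = sub B k) : A.AtomOcc m ↔ B.AtomOcc k := by simp [AtomOcc, h]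

theorem PosOcc.not_negOcc (h : A.PosOcc m) : ¬ A.NegOcc m := by
  rintro ⟨b, hb, hneg⟩
  obtain ⟨a, ha, hpos⟩ := h
  obtain rfl : a = b := Option.some.inj (ha.symm.trans hb)
  rcases hpos with rfl | ⟨n, rfl⟩ <;> simp at hneg

theorem AtomOcc.posOcc_or_negOcc (h : A.AtomOcc m) : A.PosOcc m ∨ A.NegOcc m := by
  obtain ⟨a, ha, h⟩ := h
  cases a <;> simp_all [PosOcc, NegOcc, IsAtom]

theorem posOcc_dual : A.dual.PosOcc m ↔ A.NegOcc m := by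
  simp only [PosOcc, NegOcc, sub_dual]
  rcases sub A m with _ | a
  · simp
  · cases a <;> simp [dual]

theorem negOcc_dual : A.dual.NegOcc m ↔ A.PosOcc m := by
  rw [← posOcc_dual, dual_dual]

theorem AtomOcc.dual (h : A.AtomOcc m) : A.dual.AtomOcc m :=
  h.posOcc_or_negOcc.elim (fun hp => (negOcc_dual.2 hp).atomOcc)
    fun hn => (posOcc_dual.2 hn).atomOcc

theorem atomOcc_dual : A.dual.AtomOcc m ↔ A.AtomOcc m :=
  ⟨fun h => dual_dual A ▸ h.dual, AtomOcc.dual⟩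

theorem Positive.posOcc (h : A.Positive) (hm : A.AtomOcc m) : A.PosOcc m := by
  induction h generalizing m with
  | one =>
    obtain rfl := IsAtom.eq_nil_of_atomOcc (A := Formula.one) trivial hm
    exact ⟨_, rfl, Or.inl rfl⟩
  | tens _ _ ih₁ ih₂ =>
    obtain ⟨a, ha, hatom⟩ := hm
    match m, ha with
    | [], ha => cases ha; exact hatom.elim
    | false :: _, ha => exact ih₁ ⟨a, ha, hatom⟩
    | true :: _, ha => exact ih₂ ⟨a, ha, hatom⟩

theorem Negative.negOcc (h : A.Negative) (hm : A.AtomOcc m) : A.NegOcc m := by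
  induction h generalizing m with
  | bot =>
    obtain rfl := IsAtom.eq_nil_of_atomOcc (A := Formula.bot) trivial hm
    exact ⟨_, rfl, Or.inl rfl⟩
  | parr _ _ ih₁ ih₂ =>
    obtain ⟨a, ha, hatom⟩ := hm
    match m, ha with
    | [], ha => cases ha; exact hatom.elim
    | false :: _, ha => exact ih₁ ⟨a, ha, hatom⟩
    | true :: _, ha => exact ih₂ ⟨a, ha, hatom⟩

end

theorem finite_setOf_atomOcc (A : Formula) : {m : Addr | A.AtomOcc m}.Finite := by
  have of_isAtom {a : Formula} (ha : a.IsAtom) : {m : Addr | a.AtomOcc m}.Finite :=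
    (Set.finite_singleton []).subset fun _ hm => ha.eq_nil_of_atomOcc hm
  induction A with
  | one | bot | var | covar => exact of_isAtom trivial
  | tens A B hA hB | parr A B hA hB =>
    refine ((hA.image (List.cons false)).union (hB.image (List.cons true))).subset ?_
    rintro m ⟨a, ha, hatom⟩
    match m, ha with
    | [], ha => cases ha; exact hatom.elim
    | false :: m, ha => exact Or.inl ⟨m, ⟨a, ha, hatom⟩, rfl⟩
    | true :: m, ha => exact Or.inr ⟨m, ⟨a, ha, hatom⟩, rfl⟩

end Formula

open Formula Relation

/-! ### Transitions, link by link -/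

namespace Struct

/-- The in-edges of a sync link: its positive premisses and its negative conclusions. -/
def SyncInEdge (S : Struct) (l : S.Node) (e : S.Edge) : Prop :=
  (S.tgt e = some l ∧ (S.typ e).Positive) ∨ (S.src e = l ∧ (S.typ e).Negative)

/-- `S.TokenMove n v w`: a single token may cross the link `n` from `v` to `w`, regardless of
whether `n` is active and, for a sync link, of whether the other in-edges are saturated. -/
inductive TokenMove (S : Struct) : S.Node → PosVal S → PosVal S → Prop
  | axUp {n : S.Node} {e e' : S.Edge} {m : Addr} :
      S.sort n = .ax → S.src e = n → S.src e' = n → e' ≠ e → NegOcc (S.typ e) m →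
      TokenMove S n (.atom e m) (.atom e' m)
  | cutDown {n : S.Node} {e e' : S.Edge} {m : Addr} :
      S.sort n = .cut → S.tgt e = some n → S.tgt e' = some n → e' ≠ e → PosOcc (S.typ e) m →
      TokenMove S n (.atom e m) (.atom e' m)
  | multDown {n : S.Node} {e g : S.Edge} {m : Addr} {b : Bool} :
      (S.sort n = .tens ∨ S.sort n = .parr) → S.tgt e = some n → S.src g = n →
      S.pIdx e = (if b then 1 else 0) → PosOcc (S.typ e) m →
      TokenMove S n (.atom e m) (.atom g (b :: m))
  | multUp {n : S.Node} {e g : S.Edge} {m : Addr} {b : Bool} :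
      (S.sort n = .tens ∨ S.sort n = .parr) → S.tgt e = some n → S.src g = n →
      S.pIdx e = (if b then 1 else 0) → NegOcc (S.typ g) (b :: m) →
      TokenMove S n (.atom g (b :: m)) (.atom e m)
  | lock {n : S.Node} {e : S.Edge} :
      S.sort n = .bot → S.src e = n → S.typ e = .bot →
      TokenMove S n (.atom e []) (.lock e 0)
  | syncDown {n : S.Node} {e e' : S.Edge} {m : Addr} :
      S.sort n = .sync → S.tgt e = some n → S.src e' = n → S.cIdx e' = S.pIdx e →
      (S.typ e).Positive → AtomOcc (S.typ e) m →
      TokenMove S n (.atom e m) (.atom e' m)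
  | syncUp {n : S.Node} {e e' : S.Edge} {m : Addr} :
      S.sort n = .sync → S.src e = n → S.tgt e' = some n → S.pIdx e' = S.cIdx e →
      (S.typ e).Negative → AtomOcc (S.typ e) m →
      TokenMove S n (.atom e m) (.atom e' m)

variable {S : Struct}

/-- The transitions in which one token crosses an active link other than a sync link. -/
def SoloTrans (T T' : SState S) : Prop :=
  ∃ p n v w, S.sort n ≠ .sync ∧ S.Active T n ∧ S.TokenMove n v w ∧
    T.f p = some v ∧ T'.f = Function.update T.f p (some w)

/-- The transitions in which an active `one`-link spawns a token. -/
def SpawnTrans (T T' : SState S) : Prop :=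
  ∃ e, S.sort (S.src e) = .one ∧ S.Active T (S.src e) ∧ T.f (e, []) = none ∧
    T'.f = Function.update T.f (e, []) (some (.atom e []))

/-- The transitions in which all tokens on the in-edges of an active, saturated sync link cross it
together. -/
def SyncTrans (T T' : SState S) : Prop :=
  ∃ l, S.sort l = .sync ∧ S.Active T l ∧
    (∃ q e m, T.f q = some (.atom e m) ∧ S.SyncInEdge l e) ∧
    (∀ e m, S.SyncInEdge l e → AtomOcc (S.typ e) m → ∃ q, T.f q = some (.atom e m)) ∧
    (∀ q e m, T.f q = some (.atom e m) → S.SyncInEdge l e →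
      ∃ w, S.TokenMove l (.atom e m) w ∧ T'.f q = some w) ∧
    (∀ q, (∀ e m, T.f q = some (.atom e m) → ¬ S.SyncInEdge l e) → T'.f q = T.f q)

theorem TokenMove.tgt_eq_some_of_posOcc {n : S.Node} {e : S.Edge} {m : Addr} {w : PosVal S}
    (h : S.TokenMove n (.atom e m) w) (hpos : PosOcc (S.typ e) m) : S.tgt e = some n := by
  cases h with
  | cutDown _ htgt | multDown _ htgt | syncDown _ htgt => exact htgt
  | axUp _ _ _ _ hneg | multUp _ _ _ _ hneg => exact absurd hneg hpos.not_negOcc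
  | lock _ _ htyp => exact absurd ⟨_, sub_nil _, Or.inl htyp⟩ hpos.not_negOcc
  | syncUp _ _ _ _ hneg hocc => exact absurd (hneg.negOcc hocc) hpos.not_negOcc

theorem strans_of_soloTrans {T T' : SState S} (h : SoloTrans T T') : STrans S T T' := by
  obtain ⟨p, n, v, w, hsort, hact, hmove, hv, hT'⟩ := h
  obtain ⟨hw, hrest⟩ := Function.eq_update_iff.1 hT'
  cases hmove with
  | axUp hax hsrc hsrc' hne hneg => exact .axUp hv hneg hsrc hax hact hsrc' hne hrest hw
  | cutDown hcut htgt htgt' hne hpos => exact .cutDown hv hpos htgt hcut hact htgt' hne hrest hw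
  | multDown hmul htgt hsrc hidx hpos => exact .multDown hv hpos htgt hmul hact hsrc hidx hrest hw
  | multUp hmul htgt hsrc hidx hneg => exact .multUp hv hneg hsrc hmul hact htgt hidx hrest hw
  | lock hbot hsrc htyp => exact .lockTok hv htyp hsrc hbot hact hrest hw
  | syncDown hsync | syncUp hsync => exact absurd hsync hsort

theorem strans_of_syncTrans {T T' : SState S} (h : SyncTrans T T') : STrans S T T' := by
  obtain ⟨l, hl, hact, hex, hsat, hmove, hrest⟩ := h
  refine .syncCross hl hact hex (fun e he m hm => hsat e m he hm) ?_ ?_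
    fun q hq => hrest q fun e m hv => not_or.2 (hq e m hv)
  · intro q e m hv htgt hpos
    obtain ⟨w, hw, hT'⟩ := hmove q e m hv (Or.inl ⟨htgt, hpos⟩)
    cases hw with
    | syncDown _ _ hsrc' hidx => exact ⟨_, hsrc', hidx, hT'⟩
    | syncUp _ _ _ _ hneg hocc => exact absurd (hneg.negOcc hocc) (hpos.posOcc hocc).not_negOcc
    | _ => simp_all
  · intro q e m hv hsrc hneg
    obtain ⟨w, hw, hT'⟩ := hmove q e m hv (Or.inr ⟨hsrc, hneg⟩)
    cases hw with
    | syncUp _ _ htgt' hidx => exact ⟨_, htgt', hidx, hT'⟩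
    | syncDown _ _ _ _ hpos hocc => exact absurd (hneg.negOcc hocc) (hpos.posOcc hocc).not_negOcc
    | _ => simp_all

theorem strans_of_spawnTrans {T T' : SState S} (h : SpawnTrans T T') : STrans S T T' := by
  obtain ⟨e, hone, hact, hnone, hT'⟩ := h
  obtain ⟨hw, hrest⟩ := Function.eq_update_iff.1 hT'
  exact .oneSpawn hone hact rfl hnone hrest hw

theorem solo_or_spawn_or_sync_of_strans {T T' : SState S} (h : STrans S T T') :
    SoloTrans T T' ∨ SpawnTrans T T' ∨ SyncTrans T T' := by
  have solo {p n v w} (hv : T.f p = some v) (hact : S.Active T n) (hmove : S.TokenMove n v w)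
      (hrest : ∀ q, q ≠ p → T'.f q = T.f q) (hw : T'.f p = some w) (hn : S.sort n ≠ .sync) :
      SoloTrans T T' ∨ SpawnTrans T T' ∨ SyncTrans T T' :=
    Or.inl ⟨p, n, v, w, hn, hact, hmove, hv, Function.eq_update_iff.2 ⟨hw, hrest⟩⟩
  cases h with
  | axUp hv hneg hsrc hax hact hsrc' hne hrest hw =>
    exact solo hv hact (.axUp hax hsrc hsrc' hne hneg) hrest hw (by simp [hax])
  | cutDown hv hpos htgt hcut hact htgt' hne hrest hw =>
    exact solo hv hact (.cutDown hcut htgt htgt' hne hpos) hrest hw (by simp [hcut])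
  | multDown hv hpos htgt hmul hact hsrc hidx hrest hw =>
    exact solo hv hact (.multDown hmul htgt hsrc hidx hpos) hrest hw
      (by rcases hmul with h | h <;> simp [h])
  | multUp hv hneg hsrc hmul hact htgt hidx hrest hw =>
    exact solo hv hact (.multUp hmul htgt hsrc hidx hneg) hrest hw
      (by rcases hmul with h | h <;> simp [h])
  | lockTok hv htyp hsrc hbot hact hrest hw =>
    exact solo hv hact (.lock hbot hsrc htyp) hrest hw (by simp [hbot])
  | oneSpawn hone hact hsrc hnone hrest hw =>
    subst hsrc
    exact Or.inr (Or.inl ⟨_, hone, hact, hnone, Function.eq_update_iff.2 ⟨hw, hrest⟩⟩)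
  | @syncCross l hl hact hex hsat hdown hup hrest =>
    refine Or.inr (Or.inr ⟨l, hl, hact, hex, fun e m he hm => hsat e he m hm, ?_,
      fun q hq => hrest q fun e m hv => not_or.1 (hq e m hv)⟩)
    rintro q e m hv (⟨htgt, hpos⟩ | ⟨hsrc, hneg⟩)
    · obtain ⟨e', hsrc', hidx, hT'⟩ := hdown q e m hv htgt hpos
      exact ⟨_, .syncDown hl htgt hsrc' hidx hpos (T.val_valid q _ hv), hT'⟩
    · obtain ⟨e', htgt', hidx, hT'⟩ := hup q e m hv hsrc hneg
      exact ⟨_, .syncUp hl hsrc htgt' hidx hneg (T.val_valid q _ hv), hT'⟩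

theorem strans_iff {T T' : SState S} :
    STrans S T T' ↔ SoloTrans T T' ∨ SpawnTrans T T' ∨ SyncTrans T T' := by
  refine ⟨solo_or_spawn_or_sync_of_strans, ?_⟩
  rintro (h | h | h)
  · exact strans_of_soloTrans h
  · exact strans_of_spawnTrans h
  · exact strans_of_syncTrans h

end Struct

/-! ### Tokens never collide -/

namespace Struct

variable {S : Struct}

namespace WF

theorem existsPair_ax (hS : S.WF) {n : S.Node} (hn : S.sort n = .ax) :
    ∃ e f, (∀ x, S.src x = n ↔ x = e ∨ x = f) ∧ S.typ f = (S.typ e).dual := by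
  obtain ⟨-, e, f, -, hpair, hdual⟩ := hS.1 n hn
  exact ⟨e, f, fun x => by simpa [concls] using Finset.ext_iff.1 hpair x, hdual⟩

theorem existsPair_cut (hS : S.WF) {n : S.Node} (hn : S.sort n = .cut) :
    ∃ e f, (∀ x, S.tgt x = some n ↔ x = e ∨ x = f) ∧ S.typ f = (S.typ e).dual := by
  obtain ⟨-, e, f, -, hpair, hdual⟩ := hS.2.1 n hn
  exact ⟨e, f, fun x => by simpa [prems] using Finset.ext_iff.1 hpair x, hdual⟩

theorem typ_eq_dual_of_ax (hS : S.WF) {n : S.Node} (hn : S.sort n = .ax) {x y : S.Edge}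
    (hx : S.src x = n) (hy : S.src y = n) (hne : y ≠ x) : S.typ y = (S.typ x).dual := by
  obtain ⟨e, f, hpair, hdual⟩ := hS.existsPair_ax hn
  rw [hpair] at hx hy
  rcases hx with rfl | rfl <;> rcases hy with rfl | rfl <;> simp_all [dual_dual]

theorem typ_eq_dual_of_cut (hS : S.WF) {n : S.Node} (hn : S.sort n = .cut) {x y : S.Edge}
    (hx : S.tgt x = some n) (hy : S.tgt y = some n) (hne : y ≠ x) :
    S.typ y = (S.typ x).dual := by
  obtain ⟨e, f, hpair, hdual⟩ := hS.existsPair_cut hn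
  rw [hpair] at hx hy
  rcases hx with rfl | rfl <;> rcases hy with rfl | rfl <;> simp_all [dual_dual]

theorem eq_of_ax (hS : S.WF) {n : S.Node} (hn : S.sort n = .ax) {x y z : S.Edge}
    (hx : S.src x = n) (hy : S.src y = n) (hz : S.src z = n) (hzx : z ≠ x) (hzy : z ≠ y) :
    x = y := by
  obtain ⟨e, f, hpair, -⟩ := hS.existsPair_ax hn
  rw [hpair] at hx hy hz
  grind

theorem eq_of_cut (hS : S.WF) {n : S.Node} (hn : S.sort n = .cut) {x y z : S.Edge}
    (hx : S.tgt x = some n) (hy : S.tgt y = some n) (hz : S.tgt z = some n) (hzx : z ≠ x)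
    (hzy : z ≠ y) : x = y := by
  obtain ⟨e, f, hpair, -⟩ := hS.existsPair_cut hn
  rw [hpair] at hx hy hz
  grind

theorem exists_mult (hS : S.WF) {n : S.Node} (hn : S.sort n = .tens ∨ S.sort n = .parr) :
    ∃ e f g, (∀ x, S.tgt x = some n ↔ x = e ∨ x = f) ∧ S.pIdx e = 0 ∧ S.pIdx f = 1 ∧
      (∀ x, S.src x = n ↔ x = g) ∧
      (S.typ g = .tens (S.typ e) (S.typ f) ∨ S.typ g = .parr (S.typ e) (S.typ f)) := by
  obtain ⟨e, f, g, hprems, h₀, h₁, hconcls, htyp⟩ : ∃ e f g, S.prems n = {e, f} ∧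
      S.pIdx e = 0 ∧ S.pIdx f = 1 ∧ S.concls n = {g} ∧
      (S.typ g = .tens (S.typ e) (S.typ f) ∨ S.typ g = .parr (S.typ e) (S.typ f)) := by
    rcases hn with hn | hn
    · obtain ⟨e, f, g, -, hprems, h₀, h₁, hconcls, htyp⟩ := hS.2.2.1 n hn
      exact ⟨e, f, g, hprems, h₀, h₁, hconcls, Or.inl htyp⟩
    · obtain ⟨e, f, g, -, hprems, h₀, h₁, hconcls, htyp⟩ := hS.2.2.2.1 n hn
      exact ⟨e, f, g, hprems, h₀, h₁, hconcls, Or.inr htyp⟩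
  exact ⟨e, f, g, fun x => by simpa [prems] using Finset.ext_iff.1 hprems x, h₀, h₁,
    fun x => by simpa [concls] using Finset.ext_iff.1 hconcls x, htyp⟩

theorem eq_of_src_mult (hS : S.WF) {n : S.Node} (hn : S.sort n = .tens ∨ S.sort n = .parr)
    {x y : S.Edge} (hx : S.src x = n) (hy : S.src y = n) : x = y := by
  obtain ⟨_, _, g, -, -, -, hg, -⟩ := hS.exists_mult hn
  exact ((hg x).1 hx).trans ((hg y).1 hy).symm

theorem eq_of_tgt_mult (hS : S.WF) {n : S.Node} (hn : S.sort n = .tens ∨ S.sort n = .parr)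
    {x y : S.Edge} (hx : S.tgt x = some n) (hy : S.tgt y = some n) (hxy : S.pIdx x = S.pIdx y) :
    x = y := by
  obtain ⟨e, f, _, hpair, h₀, h₁, -, -⟩ := hS.exists_mult hn
  rw [hpair] at hx hy
  grind

theorem sub_cons_of_mult (hS : S.WF) {n : S.Node} (hn : S.sort n = .tens ∨ S.sort n = .parr)
    {x g : S.Edge} (hx : S.tgt x = some n) (hg : S.src g = n) {b : Bool}
    (hb : S.pIdx x = if b then 1 else 0) (m : Addr) :
    sub (S.typ g) (b :: m) = sub (S.typ x) m := by
  obtain ⟨e, f, g', hpair, h₀, h₁, hg', htyp⟩ := hS.exists_mult hn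
  obtain rfl := (hg' g).1 hg
  rw [hpair] at hx
  rcases hx with rfl | rfl <;> rcases htyp with htyp | htyp <;> cases b <;>
    simp_all [sub]

theorem typ_eq_one (hS : S.WF) {e : S.Edge} (he : S.sort (S.src e) = .one) :
    S.typ e = .one := by
  obtain ⟨-, g, hg, htyp⟩ := hS.2.2.2.2.1 _ he
  have : e = g := by simpa [concls] using Finset.ext_iff.1 hg e
  rwa [this]

theorem typ_eq_of_sync (hS : S.WF) {l : S.Node} (hl : S.sort l = .sync) {e f : S.Edge}
    (he : S.tgt e = some l) (hf : S.src f = l) (hidx : S.cIdx f = S.pIdx e) :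
    S.typ f = S.typ e :=
  (hS.2.2.2.2.2.2.1 l hl).2.2.2 e (by simpa [prems] using he) f (by simpa [concls] using hf) hidx

theorem eq_of_tgt_sync (hS : S.WF) {l : S.Node} (hl : S.sort l = .sync) {e e' f : S.Edge}
    (he : S.tgt e = some l) (he' : S.tgt e' = some l) (hf : S.src f = l)
    (hidx : S.cIdx f = S.pIdx e) (hidx' : S.cIdx f = S.pIdx e') : e = e' :=
  ((hS.2.2.2.2.2.2.1 l hl).2.2.1 f (by simpa [concls] using hf)).unique
    ⟨by simpa [prems] using he, hidx.symm⟩ ⟨by simpa [prems] using he', hidx'.symm⟩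

theorem eq_of_src_sync (hS : S.WF) {l : S.Node} (hl : S.sort l = .sync) {e f f' : S.Edge}
    (he : S.tgt e = some l) (hf : S.src f = l) (hf' : S.src f' = l)
    (hidx : S.cIdx f = S.pIdx e) (hidx' : S.cIdx f' = S.pIdx e) : f = f' :=
  ((hS.2.2.2.2.2.2.1 l hl).2.1 e (by simpa [prems] using he)).unique
    ⟨by simpa [concls] using hf, hidx⟩ ⟨by simpa [concls] using hf', hidx'⟩

end WF

theorem TokenMove.polarity (hS : S.WF) {n : S.Node} {v : PosVal S} {e : S.Edge} {m : Addr}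
    (h : S.TokenMove n v (.atom e m)) :
    (S.src e = n ∧ PosOcc (S.typ e) m) ∨ (S.tgt e = some n ∧ NegOcc (S.typ e) m) := by
  cases h with
  | axUp hn hsrc hsrc' hne hneg =>
    exact Or.inl ⟨hsrc', by rwa [hS.typ_eq_dual_of_ax hn hsrc hsrc' hne, posOcc_dual]⟩
  | cutDown hn htgt htgt' hne hpos =>
    exact Or.inr ⟨htgt', by rwa [hS.typ_eq_dual_of_cut hn htgt htgt' hne, negOcc_dual]⟩
  | multDown hn htgt hsrc hb hpos =>
    exact Or.inl ⟨hsrc, (posOcc_congr (hS.sub_cons_of_mult hn htgt hsrc hb _)).2 hpos⟩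
  | multUp hn htgt hsrc hb hneg =>
    exact Or.inr ⟨htgt, (negOcc_congr (hS.sub_cons_of_mult hn htgt hsrc hb _)).1 hneg⟩
  | syncDown hn htgt hsrc hidx hpos hocc =>
    exact Or.inl ⟨hsrc, by simpa only [hS.typ_eq_of_sync hn htgt hsrc hidx] using hpos.posOcc hocc⟩
  | syncUp hn hsrc htgt hidx hneg hocc =>
    exact Or.inr
      ⟨htgt, by simpa only [← hS.typ_eq_of_sync hn htgt hsrc hidx.symm] using hneg.negOcc hocc⟩

theorem TokenMove.source_unique_of_sync (hS : S.WF) {n : S.Node} (hn : S.sort n = .sync)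
    {v v' w : PosVal S} (h : S.TokenMove n v w) (h' : S.TokenMove n v' w) : v = v' := by
  cases h with
  | syncDown _ htgt hsrc hidx hpos hocc =>
    cases h' with
    | syncDown _ htgt₂ _ hidx₂ => rw [hS.eq_of_tgt_sync hn htgt htgt₂ hsrc hidx hidx₂]
    | syncUp _ hsrc₂ htgt₂ hidx₂ hneg hocc₂ =>
      rw [← hS.typ_eq_of_sync hn htgt hsrc hidx,
        ← hS.typ_eq_of_sync hn htgt₂ hsrc₂ hidx₂.symm] at hpos
      exact absurd (hneg.negOcc hocc₂) (hpos.posOcc hocc₂).not_negOcc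
    | _ => simp_all
  | syncUp _ hsrc htgt hidx hneg hocc =>
    cases h' with
    | syncUp _ hsrc₂ _ hidx₂ => rw [hS.eq_of_src_sync hn htgt hsrc hsrc₂ hidx.symm hidx₂.symm]
    | syncDown _ htgt₂ hsrc₂ hidx₂ hpos hocc₂ =>
      rw [← hS.typ_eq_of_sync hn htgt₂ hsrc₂ hidx₂, ← hS.typ_eq_of_sync hn htgt hsrc hidx.symm]
        at hpos
      exact absurd (hneg.negOcc hocc) (hpos.posOcc hocc).not_negOcc
    | _ => simp_all
  | _ => simp_all

theorem TokenMove.source_unique_of_node (hS : S.WF) {n : S.Node} {v v' w : PosVal S}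
    (h : S.TokenMove n v w) (h' : S.TokenMove n v' w) : v = v' := by
  by_cases hsync : S.sort n = .sync
  · exact h.source_unique_of_sync hS hsync h'
  cases h with
  | axUp hn hsrc hsrc' hne =>
    cases h' with
    | axUp _ hsrc₂ _ hne₂ => rw [hS.eq_of_ax hn hsrc hsrc₂ hsrc' hne hne₂]
    | _ => simp_all
  | cutDown hn htgt htgt' hne =>
    cases h' with
    | cutDown _ htgt₂ _ hne₂ => rw [hS.eq_of_cut hn htgt htgt₂ htgt' hne hne₂]
    | _ => simp_all
  | multDown hn htgt hsrc hb hpos =>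
    cases h' with
    | multDown _ htgt₂ _ hb₂ => rw [hS.eq_of_tgt_mult hn htgt htgt₂ (hb.trans hb₂.symm)]
    | multUp _ htgt₂ hsrc₂ hb₂ hneg =>
      exact absurd ((negOcc_congr (hS.sub_cons_of_mult hn htgt₂ hsrc₂ hb₂ _)).1 hneg)
        ((posOcc_congr (hS.sub_cons_of_mult hn htgt hsrc hb _)).2 hpos).not_negOcc
    | _ => simp_all
  | multUp hn htgt hsrc hb hneg =>
    cases h' with
    | multUp _ _ hsrc₂ hb₂ =>
      rw [hb] at hb₂
      rw [hS.eq_of_src_mult hn hsrc hsrc₂]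
      grind
    | multDown _ htgt₂ hsrc₂ hb₂ hpos =>
      exact absurd ((negOcc_congr (hS.sub_cons_of_mult hn htgt hsrc hb _)).1 hneg)
        ((posOcc_congr (hS.sub_cons_of_mult hn htgt₂ hsrc₂ hb₂ _)).2 hpos).not_negOcc
    | _ => simp_all
  | lock => cases h'; rfl
  | syncDown hn | syncUp hn => exact absurd hn hsync

theorem TokenMove.source_unique (hS : S.WF) {n n' : S.Node} {v v' w : PosVal S}
    (h : S.TokenMove n v w) (h' : S.TokenMove n' v' w) : v = v' := by
  suffices n = n' by subst this; exact h.source_unique_of_node hS h'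
  cases w with
  | atom e m =>
    rcases h.polarity hS with ⟨hsrc, hpos⟩ | ⟨htgt, hneg⟩ <;>
      rcases h'.polarity hS with ⟨hsrc', hpos'⟩ | ⟨htgt', hneg'⟩
    · exact hsrc.symm.trans hsrc'
    · exact absurd hneg' hpos.not_negOcc
    · exact absurd hneg hpos'.not_negOcc
    · exact Option.some.inj (htgt.symm.trans htgt')
  | lock e i =>
    cases h with | lock _ hsrc => cases h' with | lock _ hsrc' => exact hsrc.symm.trans hsrc'

theorem OnePos.posOcc (hS : S.WF) {p : S.Edge × Addr} (hp : S.OnePos p) :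
    PosOcc (S.typ p.1) p.2 := by
  rw [hp.2, hS.typ_eq_one hp.1]
  exact ⟨.one, sub_nil _, Or.inl rfl⟩

theorem OnePos.not_initPos (hS : S.WF) {p : S.Edge × Addr} (hp : S.OnePos p) : ¬ S.InitPos p :=
  fun h => (hp.posOcc hS).not_negOcc h.2

/-- The positions at which a token of the machine can originate. -/
def IsOrigin (S : Struct) (p : S.Edge × Addr) : Prop := S.InitPos p ∨ S.OnePos p

theorem IsOrigin.not_tokenMove (hS : S.WF) {p : S.Edge × Addr} (hp : S.IsOrigin p) {n : S.Node}
    {v : PosVal S} : ¬ S.TokenMove n v (.atom p.1 p.2) := by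
  intro h
  rcases hp with ⟨hconcl, hneg⟩ | hp
  · rcases h.polarity hS with ⟨-, hpos⟩ | ⟨htgt, -⟩
    · exact hpos.not_negOcc hneg
    · simp [hconcl] at htgt
  · have hpos := hp.posOcc hS
    obtain ⟨hone, -⟩ := hp
    have hsrc : S.src p.1 = n :=
      (h.polarity hS).elim And.left fun hneg => absurd hneg.2 hpos.not_negOcc
    obtain ⟨e, m⟩ := p
    cases h <;> simp_all

/-- One step of the history of a token. -/
def TokenStep (v w : PosVal S) : Prop := ∃ n, S.TokenMove n v w

theorem token_cases_of_strans {T T' : SState S} (h : STrans S T T') {p : S.Edge × Addr}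
    {w : PosVal S} (hw : T'.f p = some w) :
    T.f p = some w ∨ (∃ v, T.f p = some v ∧ TokenStep v w) ∨ w = .atom p.1 p.2 := by
  rcases strans_iff.1 h with ⟨q, n, v, w', -, -, hmove, hv, hT'⟩ | ⟨e, -, -, -, hT'⟩ |
    ⟨l, -, -, -, -, hmove, hrest⟩
  · rw [hT', Function.update_apply] at hw
    split_ifs at hw with hpq
    · cases hw
      exact Or.inr (Or.inl ⟨v, hpq ▸ hv, n, hmove⟩)
    · exact Or.inl hw
  · rw [hT', Function.update_apply] at hw
    split_ifs at hw with hpe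
    · cases hw
      exact Or.inr (Or.inr (by rw [hpe]))
    · exact Or.inl hw
  · by_cases hin : ∃ e m, T.f p = some (.atom e m) ∧ S.SyncInEdge l e
    · obtain ⟨e, m, hv, he⟩ := hin
      obtain ⟨w', hstep, hw'⟩ := hmove p e m hv he
      cases hw.symm.trans hw'
      exact Or.inr (Or.inl ⟨_, hv, l, hstep⟩)
    · exact Or.inl ((hrest p fun e m hv he => hin ⟨e, m, hv, he⟩).symm.trans hw)

theorem reflTransGen_tokenStep_of_reach {T : SState S}
    (hT : ReflTransGen (STrans S) (initState S) T) {p : S.Edge × Addr} {v : PosVal S}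
    (hv : T.f p = some v) : ReflTransGen TokenStep (.atom p.1 p.2) v := by
  induction hT generalizing v with
  | refl =>
    simp only [initState, Option.ite_none_right_eq_some, Option.some.injEq] at hv
    rw [hv.2]
  | tail _ hstep ih =>
    rcases token_cases_of_strans hstep hv with h | ⟨u, hu, huv⟩ | rfl
    · exact ih h
    · exact (ih hu).tail huv
    · exact .refl

/-- Token histories can be traced back deterministically, so tokens never collide. -/
theorem eq_of_reach (hS : S.WF) {T : SState S} (hT : ReflTransGen (STrans S) (initState S) T)
    {p q : S.Edge × Addr} {v : PosVal S} (hp : T.f p = some v) (hq : T.f q = some v) :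
    p = q := by
  have eq_of_path {p q : S.Edge × Addr} (hp : S.IsOrigin p)
      (h : ReflTransGen (Function.swap TokenStep) (.atom p.1 p.2) (.atom q.1 q.2)) : p = q := by
    rcases h.cases_head with h | ⟨u, ⟨n, hu⟩, -⟩
    · injection h with h₁ h₂
      exact Prod.ext h₁ h₂
    · exact absurd hu (hp.not_tokenMove hS)
  have hpath_p := reflTransGen_swap.2 (reflTransGen_tokenStep_of_reach hT hp)
  have hpath_q := reflTransGen_swap.2 (reflTransGen_tokenStep_of_reach hT hq)
  have unique : Relator.RightUnique (Function.swap (TokenStep (S := S))) :=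
    fun _ _ _ ⟨_, h⟩ ⟨_, h'⟩ => h.source_unique hS h'
  rcases ReflTransGen.total_of_right_unique unique hpath_p hpath_q with h | h
  · exact eq_of_path (T.dom_subset p (by simp [hp])) h
  · exact (eq_of_path (T.dom_subset q (by simp [hq])) h).symm

end Struct

/-! ### Embeddings of structures -/

namespace Struct

/-- The image of a token value along a map of edges. -/
def PosVal.map {S S' : Struct} (f : S.Edge → S'.Edge) : PosVal S → PosVal S'
  | .atom e m => .atom (f e) m
  | .lock e i => .lock (f e) i

/-- An embedding of structures that is full around the links of the source: every premiss or
conclusion of such a link comes from the source. A conclusion of the source may become a premiss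
in the target. -/
structure Embedding (S S' : Struct) where
  edge : S.Edge → S'.Edge
  node : S.Node → S'.Node
  edge_injective : Function.Injective edge
  node_injective : Function.Injective node
  typ_edge (e : S.Edge) : S'.typ (edge e) = S.typ e
  sort_node (n : S.Node) : S'.sort (node n) = S.sort n
  src_edge (e : S.Edge) : S'.src (edge e) = node (S.src e)
  cIdx_edge (e : S.Edge) : S'.cIdx (edge e) = S.cIdx e
  tgt_edge {e : S.Edge} {n : S.Node} : S.tgt e = some n → S'.tgt (edge e) = some (node n)
  pIdx_edge {e : S.Edge} {n : S.Node} : S.tgt e = some n → S'.pIdx (edge e) = S.pIdx e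
  exists_of_src {e' : S'.Edge} {n : S.Node} : S'.src e' = node n → ∃ e, edge e = e'
  exists_of_tgt {e' : S'.Edge} {n : S.Node} :
    S'.tgt e' = some (node n) → ∃ e, edge e = e' ∧ S.tgt e = some n

namespace Embedding

variable {S S' : Struct} (φ : Embedding S S')

theorem exists_of_src_eq {e' : S'.Edge} {n : S.Node} (h : S'.src e' = φ.node n) :
    ∃ e, φ.edge e = e' ∧ S.src e = n := by
  obtain ⟨e, rfl⟩ := φ.exists_of_src h
  exact ⟨e, rfl, φ.node_injective ((φ.src_edge e).symm.trans h)⟩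

theorem syncInEdge_edge {l : S.Node} {e : S.Edge} (h : S.SyncInEdge l e) :
    S'.SyncInEdge (φ.node l) (φ.edge e) := by
  refine h.imp ?_ ?_
  · rintro ⟨htgt, hpos⟩
    exact ⟨φ.tgt_edge htgt, (φ.typ_edge e).symm ▸ hpos⟩
  · rintro ⟨hsrc, hneg⟩
    exact ⟨by rw [φ.src_edge, hsrc], (φ.typ_edge e).symm ▸ hneg⟩

theorem exists_of_syncInEdge {l : S.Node} {e' : S'.Edge} (h : S'.SyncInEdge (φ.node l) e') :
    ∃ e, φ.edge e = e' ∧ S.SyncInEdge l e := by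
  rcases h with ⟨htgt, hpos⟩ | ⟨hsrc, hneg⟩
  · obtain ⟨e, rfl, he⟩ := φ.exists_of_tgt htgt
    exact ⟨e, rfl, Or.inl ⟨he, φ.typ_edge e ▸ hpos⟩⟩
  · obtain ⟨e, rfl, he⟩ := φ.exists_of_src_eq hsrc
    exact ⟨e, rfl, Or.inr ⟨he, φ.typ_edge e ▸ hneg⟩⟩

theorem tokenMove_map {n : S.Node} {v w : PosVal S} (h : S.TokenMove n v w) :
    S'.TokenMove (φ.node n) (v.map φ.edge) (w.map φ.edge) := by
  have src {e : S.Edge} (h : S.src e = n) : S'.src (φ.edge e) = φ.node n := by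
    rw [φ.src_edge, h]
  cases h with
  | axUp hn hsrc hsrc' hne hneg =>
    exact .axUp ((φ.sort_node n).trans hn) (src hsrc) (src hsrc') (φ.edge_injective.ne hne)
      (φ.typ_edge _ ▸ hneg)
  | cutDown hn htgt htgt' hne hpos =>
    exact .cutDown ((φ.sort_node n).trans hn) (φ.tgt_edge htgt) (φ.tgt_edge htgt')
      (φ.edge_injective.ne hne) (φ.typ_edge _ ▸ hpos)
  | multDown hn htgt hsrc hb hpos =>
    exact .multDown (φ.sort_node n ▸ hn) (φ.tgt_edge htgt) (src hsrc)
      ((φ.pIdx_edge htgt).trans hb) (φ.typ_edge _ ▸ hpos)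
  | multUp hn htgt hsrc hb hneg =>
    exact .multUp (φ.sort_node n ▸ hn) (φ.tgt_edge htgt) (src hsrc)
      ((φ.pIdx_edge htgt).trans hb) (φ.typ_edge _ ▸ hneg)
  | lock hn hsrc htyp =>
    exact .lock ((φ.sort_node n).trans hn) (src hsrc) ((φ.typ_edge _).trans htyp)
  | syncDown hn htgt hsrc hidx hpos hocc =>
    exact .syncDown ((φ.sort_node n).trans hn) (φ.tgt_edge htgt) (src hsrc)
      (by rw [φ.cIdx_edge, hidx, φ.pIdx_edge htgt]) (φ.typ_edge _ ▸ hpos) (φ.typ_edge _ ▸ hocc)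
  | syncUp hn hsrc htgt hidx hneg hocc =>
    exact .syncUp ((φ.sort_node n).trans hn) (src hsrc) (φ.tgt_edge htgt)
      (by rw [φ.cIdx_edge, ← hidx, φ.pIdx_edge htgt]) (φ.typ_edge _ ▸ hneg) (φ.typ_edge _ ▸ hocc)

theorem exists_of_tokenMove {n : S.Node} {v' w' : PosVal S'}
    (h : S'.TokenMove (φ.node n) v' w') :
    ∃ v w, v.map φ.edge = v' ∧ w.map φ.edge = w' ∧ S.TokenMove n v w := by
  cases h with
  | axUp hn hsrc hsrc' hne hneg =>
    obtain ⟨e, rfl, he⟩ := φ.exists_of_src_eq hsrc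
    obtain ⟨f, rfl, hf⟩ := φ.exists_of_src_eq hsrc'
    exact ⟨.atom e _, .atom f _, rfl, rfl, .axUp (φ.sort_node n ▸ hn) he hf (ne_of_apply_ne _ hne)
      (φ.typ_edge e ▸ hneg)⟩
  | cutDown hn htgt htgt' hne hpos =>
    obtain ⟨e, rfl, he⟩ := φ.exists_of_tgt htgt
    obtain ⟨f, rfl, hf⟩ := φ.exists_of_tgt htgt'
    exact ⟨.atom e _, .atom f _, rfl, rfl, .cutDown (φ.sort_node n ▸ hn) he hf
      (ne_of_apply_ne _ hne) (φ.typ_edge e ▸ hpos)⟩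
  | multDown hn htgt hsrc hb hpos =>
    obtain ⟨e, rfl, he⟩ := φ.exists_of_tgt htgt
    obtain ⟨g, rfl, hg⟩ := φ.exists_of_src_eq hsrc
    exact ⟨.atom e _, .atom g _, rfl, rfl, .multDown (φ.sort_node n ▸ hn) he hg
      (φ.pIdx_edge he ▸ hb) (φ.typ_edge e ▸ hpos)⟩
  | multUp hn htgt hsrc hb hneg =>
    obtain ⟨e, rfl, he⟩ := φ.exists_of_tgt htgt
    obtain ⟨g, rfl, hg⟩ := φ.exists_of_src_eq hsrc
    exact ⟨.atom g _, .atom e _, rfl, rfl, .multUp (φ.sort_node n ▸ hn) he hg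
      (φ.pIdx_edge he ▸ hb) (φ.typ_edge g ▸ hneg)⟩
  | lock hn hsrc htyp =>
    obtain ⟨e, rfl, he⟩ := φ.exists_of_src_eq hsrc
    exact ⟨.atom e _, .lock e 0, rfl, rfl, .lock (φ.sort_node n ▸ hn) he (φ.typ_edge e ▸ htyp)⟩
  | syncDown hn htgt hsrc hidx hpos hocc =>
    obtain ⟨e, rfl, he⟩ := φ.exists_of_tgt htgt
    obtain ⟨g, rfl, hg⟩ := φ.exists_of_src_eq hsrc
    exact ⟨.atom e _, .atom g _, rfl, rfl, .syncDown (φ.sort_node n ▸ hn) he hg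
      (by rwa [φ.cIdx_edge, φ.pIdx_edge he] at hidx) (φ.typ_edge e ▸ hpos) (φ.typ_edge e ▸ hocc)⟩
  | syncUp hn hsrc htgt hidx hneg hocc =>
    obtain ⟨e, rfl, he⟩ := φ.exists_of_tgt htgt
    obtain ⟨g, rfl, hg⟩ := φ.exists_of_src_eq hsrc
    exact ⟨.atom g _, .atom e _, rfl, rfl, .syncUp (φ.sort_node n ▸ hn) hg he
      (by rwa [φ.cIdx_edge, φ.pIdx_edge he] at hidx) (φ.typ_edge g ▸ hneg) (φ.typ_edge g ▸ hocc)⟩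

end Embedding

end Struct

/-- The inclusion of the first net into a join. -/
def joinNet.inl (s : LinkSort) (C : Formula) {P Q : PNet} (hP : P.S.tgt P.main = none) :
    Struct.Embedding P.S (joinNet s C P Q).S where
  edge x := some (.inl x)
  node n := some (.inl n)
  edge_injective _ _ h := Sum.inl_injective (Option.some_injective _ h)
  node_injective _ _ h := Sum.inl_injective (Option.some_injective _ h)
  typ_edge _ := rfl
  sort_node _ := rfl
  src_edge _ := rfl
  cIdx_edge _ := rfl
  tgt_edge {e n} h := by
    have : e ≠ P.main := by rintro rfl; simp [hP] at h
    simp [joinNet, this, h]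
  pIdx_edge {e n} h := by
    have : e ≠ P.main := by rintro rfl; simp [hP] at h
    simp [joinNet, this]
  exists_of_src {e' n} h := by rcases e' with _ | x | y <;> simp_all [joinNet]
  exists_of_tgt {e' n} h := by
    rcases e' with _ | x | y <;> simp only [joinNet] at h
    · cases h
    · split_ifs at h with hx
      · cases h
      · exact ⟨x, rfl, by simpa using h⟩
    · split_ifs at h <;> simp at h

/-- The inclusion of the second net into a join. -/
def joinNet.inr (s : LinkSort) (C : Formula) {P Q : PNet} (hQ : Q.S.tgt Q.main = none) :
    Struct.Embedding Q.S (joinNet s C P Q).S where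
  edge y := some (.inr y)
  node n := some (.inr n)
  edge_injective _ _ h := Sum.inr_injective (Option.some_injective _ h)
  node_injective _ _ h := Sum.inr_injective (Option.some_injective _ h)
  typ_edge _ := rfl
  sort_node _ := rfl
  src_edge _ := rfl
  cIdx_edge _ := rfl
  tgt_edge {e n} h := by
    have : e ≠ Q.main := by rintro rfl; simp [hQ] at h
    simp [joinNet, this, h]
  pIdx_edge {e n} h := by
    have : e ≠ Q.main := by rintro rfl; simp [hQ] at h
    simp [joinNet, this]
  exists_of_src {e' n} h := by rcases e' with _ | x | y <;> simp_all [joinNet]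
  exists_of_tgt {e' n} h := by
    rcases e' with _ | x | y <;> simp only [joinNet] at h
    · cases h
    · split_ifs at h <;> simp at h
    · split_ifs at h with hy
      · cases h
      · exact ⟨y, rfl, by simpa using h⟩

theorem circNet_tgt_main (B : Formula) : (circNet B).S.tgt (circNet B).main = none := by
  cases B <;> rfl

/-- The inclusion of a structure into its closure. -/
def netClosure.inl (R : Struct) : Struct.Embedding R (netClosure R) where
  edge := Sum.inl
  node := Sum.inl
  edge_injective := Sum.inl_injective
  node_injective := Sum.inl_injective
  typ_edge _ := rfl
  sort_node _ := rfl
  src_edge _ := rfl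
  cIdx_edge _ := rfl
  tgt_edge h := by simp [netClosure, h]
  pIdx_edge _ := rfl
  exists_of_src {e' n} h := by rcases e' with e | ⟨b, x⟩ <;> simp_all [netClosure]
  exists_of_tgt {e' n} h := by
    rcases e' with e | ⟨b, x⟩ <;> simp only [netClosure] at h
    · split_ifs at h with hbad
      · simp at h
      · exact ⟨e, rfl, by simpa using h⟩
    · split_ifs at h <;> simp at h

/-- The copy of `R°(A⊥)` which is cut, in the closure, against the conclusion `b : A`. -/
abbrev netClosure.copyNet {R : Struct} (b : BadC R) : PNet := circNet (R.typ b.val).dual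

/-- The inclusion into the closure of the copy of `R°(A⊥)` cut against the conclusion `b : A`. -/
def netClosure.copy {R : Struct} (b : BadC R) :
    Struct.Embedding (copyNet b).S (netClosure R) where
  edge x := .inr ⟨b, x⟩
  node n := .inr (.inl ⟨b, n⟩)
  edge_injective _ _ h := by cases h; rfl
  node_injective _ _ h := by cases h; rfl
  typ_edge _ := rfl
  sort_node _ := rfl
  src_edge _ := rfl
  cIdx_edge _ := rfl
  tgt_edge {e n} h := by
    have : e ≠ (copyNet b).main := by rintro rfl; simp [circNet_tgt_main] at h
    simp [netClosure, this, h]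
  pIdx_edge {e n} h := by
    have : e ≠ (copyNet b).main := by rintro rfl; simp [circNet_tgt_main] at h
    simp [netClosure, this]
  exists_of_src {e' n} h := by
    rcases e' with e | ⟨b', x⟩ <;> simp only [netClosure] at h
    · cases h
    · obtain ⟨rfl, -⟩ := by simpa using h
      exact ⟨x, rfl⟩
  exists_of_tgt {e' n} h := by
    rcases e' with e | ⟨b', x⟩ <;> simp only [netClosure] at h
    · split_ifs at h <;> simp at h
    · split_ifs at h with hx
      · cases h
      · obtain ⟨n', hn', heq⟩ := by simpa using h
        obtain ⟨rfl, heq⟩ := heq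
        exact ⟨x, rfl, hn'.trans (congrArg some (eq_of_heq heq))⟩

/-! ### The nets `R°(B)` -/

/-- The addresses, in the formula of the main conclusion of a join, of the edges of a join, given
the addresses of the edges of its two components. -/
def joinAddr {E F : Type} (α : E → Addr) (β : F → Addr) : Option (E ⊕ F) → Addr
  | none => []
  | some (.inl x) => false :: α x
  | some (.inr y) => true :: β y

/-- `IsCircNet B P α`: the net `P` is `R°(B)`, and each edge `x` of `P` is labelled by the address
`α x` in `B` of the subformula occurrence that `x` carries, up to duality on the conclusions other
than the main one. -/
inductive IsCircNet : Formula → (P : PNet) → (P.S.Edge → Addr) → Prop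
  | one : IsCircNet .one oneNet fun _ => []
  | ax {A : Formula} : A.IsAtom → A ≠ .one → IsCircNet A (axNet A) fun _ => []
  | join {s : LinkSort} {A B C : Formula} {P Q : PNet} {α : P.S.Edge → Addr}
      {β : Q.S.Edge → Addr} :
      (s = .tens ∧ C = .tens A B) ∨ (s = .parr ∧ C = .parr A B) →
      IsCircNet A P α → IsCircNet B Q β → IsCircNet C (joinNet s C P Q) (joinAddr α β)

/-- The labelling of the edges of `R°(B)` by addresses in `B`; see `IsCircNet`. -/
def circAddr : (B : Formula) → (circNet B).S.Edge → Addr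
  | .one | .bot | .var _ | .covar _ => fun _ => []
  | .tens A B | .parr A B => joinAddr (circAddr A) (circAddr B)

theorem isCircNet_circNet (B : Formula) : IsCircNet B (circNet B) (circAddr B) := by
  induction B with
  | one => exact .one
  | bot | var | covar => exact .ax trivial (by simp)
  | tens A B hA hB => exact .join (Or.inl ⟨rfl, rfl⟩) hA hB
  | parr A B hA hB => exact .join (Or.inr ⟨rfl, rfl⟩) hA hB

namespace PNet

/-- The conclusions of a net other than its main conclusion. -/
def IsSide (P : PNet) (x : P.S.Edge) : Prop := P.S.tgt x = none ∧ x ≠ P.main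

/-- The edges of `R°(B)` which stand for the atom occurrences of `B`: the side conclusions and the
conclusions of the `one`-links. -/
def IsLeaf (P : PNet) (x : P.S.Edge) : Prop := P.IsSide x ∨ P.S.sort (P.S.src x) = .one

variable {s : LinkSort} {C : Formula} {P Q : PNet}

theorem not_isSide_joinNet_none : ¬ (joinNet s C P Q).IsSide none := fun h => h.2 rfl

theorem isSide_joinNet_inl {x : P.S.Edge} :
    (joinNet s C P Q).IsSide (some (.inl x)) ↔ P.IsSide x := by
  by_cases hx : x = P.main <;> simp [IsSide, joinNet, hx]

theorem isSide_joinNet_inr {y : Q.S.Edge} :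
    (joinNet s C P Q).IsSide (some (.inr y)) ↔ Q.IsSide y := by
  by_cases hy : y = Q.main <;> simp [IsSide, joinNet, hy]

theorem isLeaf_joinNet_inl {x : P.S.Edge} :
    (joinNet s C P Q).IsLeaf (some (.inl x)) ↔ P.IsLeaf x :=
  or_congr isSide_joinNet_inl Iff.rfl

theorem isLeaf_joinNet_inr {y : Q.S.Edge} :
    (joinNet s C P Q).IsLeaf (some (.inr y)) ↔ Q.IsLeaf y :=
  or_congr isSide_joinNet_inr Iff.rfl

theorem tgt_joinNet_eq_some_none {x : (joinNet s C P Q).S.Edge}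
    (hx : (joinNet s C P Q).S.tgt x = some none) :
    x = some (.inl P.main) ∨ x = some (.inr Q.main) := by
  rcases x with _ | x | x <;> simp only [joinNet] at hx
  · cases hx
  · split_ifs at hx with h
    · exact Or.inl (h ▸ rfl)
    · simp at hx
  · split_ifs at hx with h
    · exact Or.inr (h ▸ rfl)
    · simp at hx

theorem exists_tokenMove_joinNet_none {A B : Formula}
    (hs : (s = .tens ∧ C = .tens A B) ∨ (s = .parr ∧ C = .parr A B)) {m : Addr}
    (hneg : NegOcc C m) : ∃ n w, (joinNet s C P Q).S.TokenMove n (.atom none m) w := by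
  have hmult : s = .tens ∨ s = .parr := hs.imp And.left And.left
  rcases m with _ | ⟨_ | _, m⟩
  · obtain ⟨a, ha, hatom⟩ := hneg.atomOcc
    rcases hs with ⟨-, rfl⟩ | ⟨-, rfl⟩ <;> cases ha <;> exact hatom.elim
  · exact ⟨none, _, .multUp (e := some (.inl P.main)) (b := false) hmult
      (by simp [joinNet]) rfl (by simp [joinNet]) hneg⟩
  · exact ⟨none, _, .multUp (e := some (.inr Q.main)) (b := true) hmult
      (by simp [joinNet]) rfl (by simp [joinNet]) hneg⟩

end PNet

namespace IsCircNet

variable {B : Formula} {P : PNet} {α : P.S.Edge → Addr}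

theorem addr_main (h : IsCircNet B P α) : α P.main = [] := by
  cases h <;> rfl

theorem tgt_main (h : IsCircNet B P α) : P.S.tgt P.main = none := by
  cases h <;> rfl

theorem boxes_eq_empty (h : IsCircNet B P α) (n : P.S.Node) : P.S.boxes n = ∅ := by
  induction h with
  | one | ax => rfl
  | join _ _ _ ihP ihQ =>
    rcases n with _ | n | n
    · rfl
    · exact (congrArg (Finset.image _) (ihP n)).trans (Finset.image_empty _)
    · exact (congrArg (Finset.image _) (ihQ n)).trans (Finset.image_empty _)

theorem sort_cases (h : IsCircNet B P α) (n : P.S.Node) :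
    P.S.sort n = .one ∨ P.S.sort n = .ax ∨ P.S.sort n = .tens ∨ P.S.sort n = .parr := by
  induction h with
  | one => exact Or.inl rfl
  | ax => exact Or.inr (Or.inl rfl)
  | join hs _ _ ihP ihQ =>
    rcases n with _ | n | n
    · exact Or.inr (Or.inr (hs.imp And.left And.left))
    · exact ihP n
    · exact ihQ n

theorem typ_eq_of_sort_one (h : IsCircNet B P α) {x : P.S.Edge}
    (hx : P.S.sort (P.S.src x) = .one) : P.S.typ x = .one := by
  induction h with
  | one => rfl
  | ax => cases hx
  | join hs _ _ ihP ihQ =>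
    rcases x with _ | x | x
    · rcases hs with ⟨rfl, -⟩ | ⟨rfl, -⟩ <;> cases hx
    · exact ihP hx
    · exact ihQ hx

theorem isAtom_typ_of_sort_ax (h : IsCircNet B P α) {x : P.S.Edge}
    (hx : P.S.sort (P.S.src x) = .ax) : (P.S.typ x).IsAtom := by
  induction h with
  | one => cases hx
  | ax hA => cases x <;> [exact hA.dual; exact hA]
  | join hs _ _ ihP ihQ =>
    rcases x with _ | x | x
    · rcases hs with ⟨rfl, -⟩ | ⟨rfl, -⟩ <;> cases hx
    · exact ihP hx
    · exact ihQ hx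

theorem sort_eq_ax_of_isSide (h : IsCircNet B P α) {x : P.S.Edge} (hx : P.IsSide x) :
    P.S.sort (P.S.src x) = .ax := by
  induction h with
  | one => exact absurd rfl hx.2
  | ax => rfl
  | join _ _ _ ihP ihQ =>
    rcases x with _ | x | x
    · exact absurd hx PNet.not_isSide_joinNet_none
    · exact ihP (PNet.isSide_joinNet_inl.1 hx)
    · exact ihQ (PNet.isSide_joinNet_inr.1 hx)

theorem sub_cons_join {s : LinkSort} {A B C : Formula}
    (hs : (s = .tens ∧ C = .tens A B) ∨ (s = .parr ∧ C = .parr A B)) (b : Bool) (m : Addr) :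
    sub C (b :: m) = sub (if b then B else A) m := by
  rcases hs with ⟨-, rfl⟩ | ⟨-, rfl⟩ <;> cases b <;> rfl

theorem sub_addr_of_not_isSide (h : IsCircNet B P α) {x : P.S.Edge} (hx : ¬ P.IsSide x) :
    sub B (α x) = some (P.S.typ x) := by
  induction h with
  | one => rfl
  | ax =>
    cases x
    · exact absurd ⟨rfl, Bool.false_ne_true⟩ hx
    · exact sub_nil _
  | join hs _ _ ihP ihQ =>
    rcases x with _ | x | x
    · exact sub_nil _
    · exact (sub_cons_join hs false _).trans (ihP (mt PNet.isSide_joinNet_inl.2 hx))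
    · exact (sub_cons_join hs true _).trans (ihQ (mt PNet.isSide_joinNet_inr.2 hx))

theorem sub_addr_of_isSide (h : IsCircNet B P α) {x : P.S.Edge} (hx : P.IsSide x) :
    sub B (α x) = some (P.S.typ x).dual := by
  induction h with
  | one => exact absurd rfl hx.2
  | @ax A =>
    cases x
    · exact (sub_nil A).trans (congrArg some (dual_dual A).symm)
    · exact absurd rfl hx.2
  | join hs _ _ ihP ihQ =>
    rcases x with _ | x | x
    · exact absurd hx PNet.not_isSide_joinNet_none
    · exact (sub_cons_join hs false _).trans (ihP (PNet.isSide_joinNet_inl.1 hx))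
    · exact (sub_cons_join hs true _).trans (ihQ (PNet.isSide_joinNet_inr.1 hx))

theorem exists_isLeaf (h : IsCircNet B P α) {k : Addr} (hk : B.AtomOcc k) :
    ∃ x, P.IsLeaf x ∧ α x = k := by
  induction h generalizing k with
  | one => exact ⟨(), Or.inr rfl, (IsAtom.eq_nil_of_atomOcc (A := .one) trivial hk).symm⟩
  | ax hA => exact ⟨false, Or.inl ⟨rfl, Bool.false_ne_true⟩, (hA.eq_nil_of_atomOcc hk).symm⟩
  | join hs _ _ ihP ihQ =>
    rcases k with _ | ⟨_ | _, k⟩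
    · obtain ⟨a, ha, hatom⟩ := hk
      rcases hs with ⟨-, rfl⟩ | ⟨-, rfl⟩ <;> cases ha <;> exact hatom.elim
    · obtain ⟨x, hx, rfl⟩ := ihP ((atomOcc_congr (sub_cons_join hs false k)).1 hk)
      exact ⟨some (.inl x), PNet.isLeaf_joinNet_inl.2 hx, rfl⟩
    · obtain ⟨y, hy, rfl⟩ := ihQ ((atomOcc_congr (sub_cons_join hs true k)).1 hk)
      exact ⟨some (.inr y), PNet.isLeaf_joinNet_inr.2 hy, rfl⟩

theorem eq_of_isLeaf (h : IsCircNet B P α) {x y : P.S.Edge} (hx : P.IsLeaf x) (hy : P.IsLeaf y)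
    (hxy : α x = α y) : x = y := by
  induction h with
  | one => rfl
  | @ax A =>
    have eq_false {z : Bool} (hz : (axNet A).IsLeaf z) : z = false := by
      rcases hz with hz | hz
      · exact Bool.eq_false_of_not_eq_true hz.2
      · cases hz
    exact (eq_false hx).trans (eq_false hy).symm
  | @join s A B C P Q α β hs _ _ ihP ihQ =>
    have ne_none {z : (joinNet s C P Q).S.Edge} (hz : (joinNet s C P Q).IsLeaf z) : z ≠ none := by
      rintro rfl
      rcases hz with hz | hz
      · exact PNet.not_isSide_joinNet_none hz
      · rcases hs with ⟨rfl, -⟩ | ⟨rfl, -⟩ <;> cases hz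
    rcases x with _ | x | x <;> rcases y with _ | y | y
    · rfl
    · exact absurd rfl (ne_none hx)
    · exact absurd rfl (ne_none hx)
    · exact absurd rfl (ne_none hy)
    · rw [ihP (PNet.isLeaf_joinNet_inl.1 hx) (PNet.isLeaf_joinNet_inl.1 hy) (List.cons.inj hxy).2]
    · cases (List.cons.inj hxy).1
    · exact absurd rfl (ne_none hy)
    · cases (List.cons.inj hxy).1
    · rw [ihQ (PNet.isLeaf_joinNet_inr.1 hx) (PNet.isLeaf_joinNet_inr.1 hy) (List.cons.inj hxy).2]

theorem addr_eq_append_of_tgt (h : IsCircNet B P α) {n : P.S.Node} {x g : P.S.Edge} {b : Bool}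
    (hx : P.S.tgt x = some n) (hg : P.S.src g = n) (hb : P.S.pIdx x = if b then 1 else 0) :
    α x = α g ++ [b] := by
  induction h with
  | one | ax => cases hx
  | @join s A B C P Q α β _ hP hQ ihP ihQ =>
    rcases n with _ | n | n
    · have hg : g = none := by rcases g with _ | g | g <;> [rfl; cases hg; cases hg]
      rcases PNet.tgt_joinNet_eq_some_none hx with rfl | rfl <;>
        cases b <;> simp_all [joinNet, joinAddr, hP.addr_main, hQ.addr_main]
    · obtain ⟨x, rfl, hx'⟩ := (joinNet.inl s C hP.tgt_main).exists_of_tgt hx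
      obtain ⟨g, rfl, hg'⟩ := (joinNet.inl s C hP.tgt_main).exists_of_src_eq hg
      rw [(joinNet.inl s C hP.tgt_main).pIdx_edge hx'] at hb
      exact congrArg (List.cons false) (ihP hx' hg' hb)
    · obtain ⟨x, rfl, hx'⟩ := (joinNet.inr s C hQ.tgt_main).exists_of_tgt hx
      obtain ⟨g, rfl, hg'⟩ := (joinNet.inr s C hQ.tgt_main).exists_of_src_eq hg
      rw [(joinNet.inr s C hQ.tgt_main).pIdx_edge hx'] at hb
      exact congrArg (List.cons true) (ihQ hx' hg' hb)

theorem ax_pair (h : IsCircNet B P α) {n : P.S.Node} {x y : P.S.Edge} (hn : P.S.sort n = .ax)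
    (hx : P.S.src x = n) (hy : P.S.src y = n) (hne : y ≠ x) :
    α x = α y ∧ (P.IsSide x ↔ ¬ P.IsSide y) := by
  induction h with
  | one => cases hn
  | ax =>
    refine ⟨rfl, ?_⟩
    cases x <;> cases y <;> simp_all [PNet.IsSide, axNet]
  | @join s A B C P Q α β hs hP hQ ihP ihQ =>
    rcases n with _ | n | n
    · rcases hs with ⟨rfl, -⟩ | ⟨rfl, -⟩ <;> cases hn
    · obtain ⟨x, rfl, hx'⟩ := (joinNet.inl s C hP.tgt_main).exists_of_src_eq hx
      obtain ⟨y, rfl, hy'⟩ := (joinNet.inl s C hP.tgt_main).exists_of_src_eq hy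
      obtain ⟨haddr, hside⟩ := ihP hn hx' hy' (ne_of_apply_ne _ hne)
      exact ⟨congrArg (List.cons false) haddr,
        PNet.isSide_joinNet_inl.trans (hside.trans (not_congr PNet.isSide_joinNet_inl.symm))⟩
    · obtain ⟨x, rfl, hx'⟩ := (joinNet.inr s C hQ.tgt_main).exists_of_src_eq hx
      obtain ⟨y, rfl, hy'⟩ := (joinNet.inr s C hQ.tgt_main).exists_of_src_eq hy
      obtain ⟨haddr, hside⟩ := ihQ hn hx' hy' (ne_of_apply_ne _ hne)
      exact ⟨congrArg (List.cons true) haddr,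
        PNet.isSide_joinNet_inr.trans (hside.trans (not_congr PNet.isSide_joinNet_inr.symm))⟩

theorem not_isSide_of_mult (h : IsCircNet B P α) {x : P.S.Edge}
    (hx : P.S.sort (P.S.src x) = .tens ∨ P.S.sort (P.S.src x) = .parr) : ¬ P.IsSide x :=
  fun hside => by simp [h.sort_eq_ax_of_isSide hside] at hx

theorem posOcc_iff_of_not_isSide (h : IsCircNet B P α) {x : P.S.Edge} (hx : ¬ P.IsSide x)
    (m : Addr) : PosOcc (P.S.typ x) m ↔ PosOcc B (α x ++ m) :=
  posOcc_congr (by rw [sub_append, h.sub_addr_of_not_isSide hx, Option.bind_some])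

theorem posOcc_iff_of_isSide (h : IsCircNet B P α) {x : P.S.Edge} (hx : P.IsSide x)
    (m : Addr) : PosOcc (P.S.typ x) m ↔ NegOcc B (α x ++ m) := by
  rw [← negOcc_dual]
  exact negOcc_congr (by rw [sub_append, h.sub_addr_of_isSide hx, Option.bind_some])

theorem negOcc_iff_of_not_isSide (h : IsCircNet B P α) {x : P.S.Edge} (hx : ¬ P.IsSide x)
    (m : Addr) : NegOcc (P.S.typ x) m ↔ NegOcc B (α x ++ m) :=
  negOcc_congr (by rw [sub_append, h.sub_addr_of_not_isSide hx, Option.bind_some])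

theorem negOcc_iff_of_isSide (h : IsCircNet B P α) {x : P.S.Edge} (hx : P.IsSide x)
    (m : Addr) : NegOcc (P.S.typ x) m ↔ PosOcc B (α x ++ m) := by
  rw [← posOcc_dual]
  exact posOcc_congr (by rw [sub_append, h.sub_addr_of_isSide hx, Option.bind_some])

theorem atomOcc_iff (h : IsCircNet B P α) (x : P.S.Edge) (m : Addr) :
    AtomOcc (P.S.typ x) m ↔ AtomOcc B (α x ++ m) := by
  by_cases hx : P.IsSide x
  · rw [← atomOcc_dual]
    exact atomOcc_congr (by rw [sub_append, h.sub_addr_of_isSide hx, Option.bind_some])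
  · exact atomOcc_congr (by rw [sub_append, h.sub_addr_of_not_isSide hx, Option.bind_some])

end IsCircNet

open Classical in
/-- The number of links which a token at the position `(x, m)` of `R°(B)` still has to cross, inside
`R°(B)` or through the cut on its main conclusion, before it leaves `R°(B)` or comes to rest on a
side conclusion. -/
noncomputable def PNet.residual (P : PNet) (α : P.S.Edge → Addr) (x : P.S.Edge) (m : Addr) : ℕ :=
  if P.IsSide x then if PosOcc (P.S.typ x) m then 0 else (α x).length + 2
  else if PosOcc (P.S.typ x) m then (α x).length + 1 else m.length + 1

namespace IsCircNet

variable {B : Formula} {P : PNet} {α : P.S.Edge → Addr}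

theorem residual_lt_of_ax (h : IsCircNet B P α) {n : P.S.Node} {x y : P.S.Edge} {m : Addr}
    (hn : P.S.sort n = .ax) (hx : P.S.src x = n) (hy : P.S.src y = n) (hne : y ≠ x)
    (hneg : NegOcc (P.S.typ x) m) : P.residual α y m < P.residual α x m := by
  obtain rfl : m = [] :=
    (h.isAtom_typ_of_sort_ax (hx ▸ hn)).eq_nil_of_atomOcc hneg.atomOcc
  obtain ⟨haddr, hside⟩ := h.ax_pair hn hx hy hne
  have hpos : ¬ PosOcc (P.S.typ x) [] := fun hpos => hpos.not_negOcc hneg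
  by_cases hxs : P.IsSide x
  · have hys := hside.1 hxs
    have hpos' : PosOcc (P.S.typ y) [] := by
      rw [h.posOcc_iff_of_not_isSide hys, ← haddr]
      exact (h.negOcc_iff_of_isSide hxs []).1 hneg
    simp only [PNet.residual, hxs, hys, hpos, hpos', haddr, if_true, if_false, List.length_nil]
    omega
  · have hys := not_not.1 (mt hside.2 hxs)
    have hpos' : PosOcc (P.S.typ y) [] := by
      rw [h.posOcc_iff_of_isSide hys, ← haddr]
      exact (h.negOcc_iff_of_not_isSide hxs []).1 hneg
    simp only [PNet.residual, hxs, hys, hpos, hpos', if_true, if_false, List.length_nil]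
    omega

theorem residual_lt_of_mult (h : IsCircNet B P α) {n : P.S.Node} {x g : P.S.Edge} {m : Addr}
    {b : Bool} (hn : P.S.sort n = .tens ∨ P.S.sort n = .parr) (hx : P.S.tgt x = some n)
    (hg : P.S.src g = n) (hb : P.S.pIdx x = if b then 1 else 0) :
    (PosOcc (P.S.typ x) m → P.residual α g (b :: m) < P.residual α x m) ∧
      (NegOcc (P.S.typ g) (b :: m) → P.residual α x m < P.residual α g (b :: m)) := by
  have haddr := h.addr_eq_append_of_tgt hx hg hb
  have hxs : ¬ P.IsSide x := fun hside => by simp [hside.1] at hx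
  have hgs := h.not_isSide_of_mult (hg ▸ hn)
  have hpos_iff : PosOcc (P.S.typ x) m ↔ PosOcc (P.S.typ g) (b :: m) := by
    rw [h.posOcc_iff_of_not_isSide hxs, h.posOcc_iff_of_not_isSide hgs, haddr,
      List.append_assoc, List.singleton_append]
  constructor
  · intro hpos
    simp [PNet.residual, hxs, hgs, hpos, hpos_iff.1 hpos, haddr]
  · intro hneg
    have hpos : ¬ PosOcc (P.S.typ g) (b :: m) := fun hpos => hpos.not_negOcc hneg
    simp [PNet.residual, hxs, hgs, hpos, mt hpos_iff.1 hpos]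

theorem addr_eq_and_residual_lt_of_tokenMove (h : IsCircNet B P α) {n : P.S.Node}
    {v w : Struct.PosVal P.S} (hmove : P.S.TokenMove n v w) :
    ∃ x m y k, v = .atom x m ∧ w = .atom y k ∧ α y ++ k = α x ++ m ∧
      P.residual α y k < P.residual α x m := by
  cases hmove with
  | axUp hn hx hy hne hneg =>
    exact ⟨_, _, _, _, rfl, rfl, by rw [(h.ax_pair hn hx hy hne).1],
      h.residual_lt_of_ax hn hx hy hne hneg⟩
  | multDown hn hx hg hb hpos =>
    exact ⟨_, _, _, _, rfl, rfl, by simp [h.addr_eq_append_of_tgt hx hg hb],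
      (h.residual_lt_of_mult hn hx hg hb).1 hpos⟩
  | multUp hn hx hg hb hneg =>
    exact ⟨_, _, _, _, rfl, rfl, by simp [h.addr_eq_append_of_tgt hx hg hb],
      (h.residual_lt_of_mult hn hx hg hb).2 hneg⟩
  | cutDown hn | lock hn | syncDown hn | syncUp hn =>
    rcases h.sort_cases _ with h | h | h | h <;> cases hn.symm.trans h

theorem exists_tokenMove (h : IsCircNet B P α) {x : P.S.Edge} {m : Addr}
    (hm : AtomOcc (P.S.typ x) m) (hx : ¬ (PosOcc (P.S.typ x) m ∧ P.S.tgt x = none)) :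
    ∃ n w, P.S.TokenMove n (.atom x m) w := by
  induction h with
  | one =>
    obtain rfl := IsAtom.eq_nil_of_atomOcc (A := .one) trivial hm
    exact absurd ⟨⟨_, rfl, Or.inl rfl⟩, rfl⟩ hx
  | ax =>
    have hneg := hm.posOcc_or_negOcc.resolve_left fun hpos => hx ⟨hpos, rfl⟩
    exact ⟨(), _, .axUp (e' := !x) rfl rfl rfl (Bool.not_ne_self x) hneg⟩
  | @join s A B C P Q α β hs hP hQ ihP ihQ =>
    have hmult : s = .tens ∨ s = .parr := hs.imp And.left And.left
    rcases x with _ | x | x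
    · exact PNet.exists_tokenMove_joinNet_none hs
        (hm.posOcc_or_negOcc.resolve_left fun hpos => hx ⟨hpos, rfl⟩)
    · by_cases hexit : PosOcc (P.S.typ x) m ∧ P.S.tgt x = none
      · by_cases hmain : x = P.main
        · exact ⟨none, _, .multDown (b := false) (g := none) hmult (if_pos hmain) rfl
            (if_pos hmain) hexit.1⟩
        · exact absurd ⟨hexit.1, (PNet.isSide_joinNet_inl.2 ⟨hexit.2, hmain⟩).1⟩ hx
      · obtain ⟨n, w, hmove⟩ := ihP hm hexit
        exact ⟨_, _, (joinNet.inl s C hP.tgt_main).tokenMove_map hmove⟩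
    · by_cases hexit : PosOcc (Q.S.typ x) m ∧ Q.S.tgt x = none
      · by_cases hmain : x = Q.main
        · exact ⟨none, _, .multDown (b := true) (g := none) hmult (if_pos hmain) rfl
            (if_pos hmain) hexit.1⟩
        · exact absurd ⟨hexit.1, (PNet.isSide_joinNet_inr.2 ⟨hexit.2, hmain⟩).1⟩ hx
      · obtain ⟨n, w, hmove⟩ := ihQ hm hexit
        exact ⟨_, _, (joinNet.inr s C hQ.tgt_main).tokenMove_map hmove⟩

end IsCircNet

/-! ### The projection of positions -/

namespace netClosure

open Struct

variable {R : Struct}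

/-- The labelling of the edges of the copy of `R°(A⊥)` cut against the conclusion `b : A` by
addresses in `A⊥`, or equivalently in `A`. -/
abbrev copyAddr (b : BadC R) : (copyNet b).S.Edge → Addr := circAddr (R.typ b.val).dual

theorem isCircNet_copyNet (b : BadC R) :
    IsCircNet (R.typ b.val).dual (copyNet b) (copyAddr b) :=
  isCircNet_circNet _

/-- The conclusions of `R` which are cut in its closure. -/
def IsCutConcl (e : R.Edge) : Prop := R.tgt e = none ∧ (R.typ e).hasBotB = true

theorem tgt_inl_eq_none {e : R.Edge} :
    (netClosure R).tgt (.inl e) = none ↔ R.tgt e = none ∧ ¬ IsCutConcl e := by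
  by_cases h : R.tgt e = none ∧ (R.typ e).hasBotB = true
  · exact iff_of_false (by simp only [netClosure, dif_pos h, reduceCtorEq, not_false_iff])
      fun h' => h'.2 h
  · have htgt : (netClosure R).tgt (.inl e) = (R.tgt e).map Sum.inl := dif_neg h
    rw [htgt]
    exact Option.map_eq_none_iff.trans (and_iff_left h).symm

theorem tgt_inl_cutConcl (b : BadC R) : (netClosure R).tgt (.inl b.val) = some (.inr (.inr b)) := by
  simp only [netClosure, dif_pos b.property]

theorem tgt_inr_main (b : BadC R) :
    (netClosure R).tgt (.inr ⟨b, (copyNet b).main⟩) = some (.inr (.inr b)) :=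
  if_pos rfl

theorem tgt_inr_eq_none {b : BadC R} {x : (copyNet b).S.Edge} :
    (netClosure R).tgt (.inr ⟨b, x⟩) = none ↔ (copyNet b).IsSide x := by
  by_cases hx : x = (copyNet b).main <;> simp [netClosure, PNet.IsSide, hx]

theorem eq_of_tgt_eq_cut {e : (netClosure R).Edge} {b : BadC R}
    (he : (netClosure R).tgt e = some (.inr (.inr b))) :
    e = .inl b.val ∨ e = .inr ⟨b, (copyNet b).main⟩ := by
  rcases e with e | ⟨b', x⟩ <;> simp only [netClosure] at he <;> split_ifs at he with h
  · cases he
    exact Or.inl rfl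
  · simp at he
  · cases he
    exact Or.inr (by rw [h])
  · simp at he

/-- The conclusion of `R` against which the copy containing `e` is cut; the edge itself if it is an
edge of `R`. -/
def baseEdge : (netClosure R).Edge → R.Edge
  | .inl e => e
  | .inr ⟨b, _⟩ => b.val

/-- The address, in the formula of `baseEdge e`, of the subformula occurrence carried by `e`. -/
def baseAddr : (netClosure R).Edge → Addr
  | .inl _ => []
  | .inr ⟨b, x⟩ => copyAddr b x

/-- The projection of the positions of the closure to the positions of `R`. -/
def posMap (p : (netClosure R).Edge × Addr) : R.Edge × Addr :=
  (baseEdge p.1, baseAddr p.1 ++ p.2)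

/-- The projection of the token values of the closure to the token values of `R`. -/
def valMap : PosVal (netClosure R) → PosVal R
  | .atom e m => .atom (baseEdge e) (baseAddr e ++ m)
  | .lock e i => .lock (baseEdge e) i

theorem valMap_map_inl (v : PosVal R) : valMap (v.map (inl R).edge) = v := by
  cases v <;> rfl

theorem atomOcc_typ_iff (e : (netClosure R).Edge) (m : Addr) :
    AtomOcc ((netClosure R).typ e) m ↔ AtomOcc (R.typ (baseEdge e)) (baseAddr e ++ m) := by
  rcases e with e | ⟨b, x⟩
  · exact Iff.rfl
  · exact ((isCircNet_copyNet b).atomOcc_iff x m).trans atomOcc_dual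

theorem exists_of_sort_src_eq_bot {e : (netClosure R).Edge}
    (he : (netClosure R).sort ((netClosure R).src e) = .bot) :
    ∃ e₀, e = .inl e₀ ∧ R.sort (R.src e₀) = .bot := by
  rcases e with e | ⟨b, x⟩
  · exact ⟨e, rfl, he⟩
  · rcases (isCircNet_copyNet b).sort_cases ((copyNet b).S.src x) with h | h | h | h <;>
      cases h.symm.trans he

theorem validVal_valMap {v : PosVal (netClosure R)} (hv : (netClosure R).ValidVal v) :
    R.ValidVal (valMap v) := by
  cases v with
  | atom e m => exact (atomOcc_typ_iff e m).1 hv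
  | lock e i =>
    obtain ⟨e, rfl, he⟩ := exists_of_sort_src_eq_bot hv
    exact he

theorem validVal_map_inl {v : PosVal R} (hv : R.ValidVal v) :
    (netClosure R).ValidVal (v.map (inl R).edge) := by
  cases v <;> exact hv

theorem isOrigin_inl {e : R.Edge} {m : Addr} :
    (netClosure R).IsOrigin (.inl e, m) ↔
      (R.InitPos (e, m) ∧ ¬ IsCutConcl e) ∨ R.OnePos (e, m) := by
  refine or_congr ?_ Iff.rfl
  exact (and_congr_left' tgt_inl_eq_none).trans and_right_comm

theorem posOcc_typ_iff_of_isSide {b : BadC R} {x : (copyNet b).S.Edge} (hx : (copyNet b).IsSide x)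
    {m : Addr} :
    PosOcc ((copyNet b).S.typ x) m ↔ m = [] ∧ PosOcc (R.typ b.val) (copyAddr b x) := by
  have hcopy := isCircNet_copyNet b
  have hatom := hcopy.isAtom_typ_of_sort_ax (hcopy.sort_eq_ax_of_isSide hx)
  have hnil : PosOcc ((copyNet b).S.typ x) [] ↔ PosOcc (R.typ b.val) (copyAddr b x) := by
    rw [hcopy.posOcc_iff_of_isSide hx, List.append_nil, negOcc_dual]
  constructor
  · intro h
    obtain rfl := hatom.eq_nil_of_atomOcc h.atomOcc
    exact ⟨rfl, hnil.1 h⟩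
  · rintro ⟨rfl, h⟩
    exact hnil.2 h

theorem negOcc_typ_iff_of_isSide {b : BadC R} {x : (copyNet b).S.Edge} (hx : (copyNet b).IsSide x)
    {m : Addr} :
    NegOcc ((copyNet b).S.typ x) m ↔ m = [] ∧ NegOcc (R.typ b.val) (copyAddr b x) := by
  have hcopy := isCircNet_copyNet b
  have hatom := hcopy.isAtom_typ_of_sort_ax (hcopy.sort_eq_ax_of_isSide hx)
  have hnil : NegOcc ((copyNet b).S.typ x) [] ↔ NegOcc (R.typ b.val) (copyAddr b x) := by
    rw [hcopy.negOcc_iff_of_isSide hx, List.append_nil, posOcc_dual]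
  constructor
  · intro h
    obtain rfl := hatom.eq_nil_of_atomOcc h.atomOcc
    exact ⟨rfl, hnil.1 h⟩
  · rintro ⟨rfl, h⟩
    exact hnil.2 h

theorem not_isSide_of_sort_one {b : BadC R} {x : (copyNet b).S.Edge}
    (hx : (copyNet b).S.sort ((copyNet b).S.src x) = .one) : ¬ (copyNet b).IsSide x := fun h => by
  cases ((isCircNet_copyNet b).sort_eq_ax_of_isSide h).symm.trans hx

theorem negOcc_copyAddr_of_sort_one {b : BadC R} {x : (copyNet b).S.Edge}
    (hx : (copyNet b).S.sort ((copyNet b).S.src x) = .one) :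
    NegOcc (R.typ b.val) (copyAddr b x) := by
  have hcopy := isCircNet_copyNet b
  rw [← posOcc_dual]
  refine ⟨.one, ?_, Or.inl rfl⟩
  rw [hcopy.sub_addr_of_not_isSide (not_isSide_of_sort_one hx), hcopy.typ_eq_of_sort_one hx]

theorem isOrigin_inr {b : BadC R} {x : (copyNet b).S.Edge} {m : Addr} :
    (netClosure R).IsOrigin (.inr ⟨b, x⟩, m) ↔
      (copyNet b).IsLeaf x ∧ m = [] ∧ NegOcc (R.typ b.val) (copyAddr b x) := by
  constructor
  · rintro (⟨htgt, hneg⟩ | ⟨hone, rfl⟩)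
    · have hside := tgt_inr_eq_none.1 htgt
      exact ⟨Or.inl hside, (negOcc_typ_iff_of_isSide hside).1 hneg⟩
    · exact ⟨Or.inr hone, rfl, negOcc_copyAddr_of_sort_one hone⟩
  · rintro ⟨hside | hone, rfl, hneg⟩
    · exact Or.inl ⟨tgt_inr_eq_none.2 hside, (negOcc_typ_iff_of_isSide hside).2 ⟨rfl, hneg⟩⟩
    · exact Or.inr ⟨hone, rfl⟩

theorem initPos_posMap_inr {b : BadC R} {x : (copyNet b).S.Edge} {m : Addr}
    (hp : (netClosure R).IsOrigin (.inr ⟨b, x⟩, m)) :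
    R.InitPos (posMap (.inr ⟨b, x⟩, m)) := by
  obtain ⟨-, rfl, hneg⟩ := isOrigin_inr.1 hp
  exact ⟨b.property.1, by rwa [posMap, List.append_nil]⟩

theorem initPos_posMap {p : (netClosure R).Edge × Addr} (hp : (netClosure R).InitPos p) :
    R.InitPos (posMap p) := by
  rcases p with ⟨e | ⟨b, x⟩, m⟩
  · exact ⟨(tgt_inl_eq_none.1 hp.1).1, hp.2⟩
  · exact initPos_posMap_inr (Or.inl hp)

theorem isOrigin_posMap {p : (netClosure R).Edge × Addr} (hp : (netClosure R).IsOrigin p) :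
    R.IsOrigin (posMap p) := by
  rcases p with ⟨e | ⟨b, x⟩, m⟩
  · exact (isOrigin_inl.1 hp).imp_left And.left
  · exact Or.inl (initPos_posMap_inr hp)

theorem exists_isOrigin_posMap_eq {q : R.Edge × Addr} (hq : R.IsOrigin q) :
    ∃ p, (netClosure R).IsOrigin p ∧ posMap p = q := by
  obtain ⟨e, m⟩ := q
  by_cases hcut : R.InitPos (e, m) ∧ IsCutConcl e
  · obtain ⟨⟨-, hneg⟩, hcut⟩ := hcut
    obtain ⟨x, hleaf, rfl⟩ := (isCircNet_copyNet ⟨e, hcut⟩).exists_isLeaf hneg.atomOcc.dual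
    exact ⟨(.inr ⟨⟨e, hcut⟩, x⟩, []), isOrigin_inr.2 ⟨hleaf, rfl, hneg⟩,
      Prod.ext rfl (List.append_nil _)⟩
  · exact ⟨(.inl e, m), isOrigin_inl.2 (hq.imp_left fun h => ⟨h, fun h' => hcut ⟨h, h'⟩⟩), rfl⟩

theorem posMap_injOn (hR : R.WF) {p p' : (netClosure R).Edge × Addr}
    (hp : (netClosure R).IsOrigin p) (hp' : (netClosure R).IsOrigin p')
    (h : posMap p = posMap p') : p = p' := by
  have inl_ne_inr {e m b x k} (hp : (netClosure R).IsOrigin (.inl e, m)) :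
      posMap (.inl e, m) ≠ posMap (R := R) (.inr ⟨b, x⟩, k) := by
    intro h
    obtain rfl : e = b.val := congrArg Prod.fst h
    rcases isOrigin_inl.1 hp with ⟨-, hcut⟩ | ⟨hone, -⟩
    · exact hcut b.property
    · have hbot := b.property.2
      simp [hR.typ_eq_one hone, hasBotB] at hbot
  rcases p with ⟨e | ⟨b, x⟩, m⟩ <;> rcases p' with ⟨e' | ⟨b', x'⟩, m'⟩
  · obtain ⟨h₁, h₂⟩ := Prod.ext_iff.1 h
    exact Prod.ext (congrArg Sum.inl h₁) h₂
  · exact absurd h (inl_ne_inr hp)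
  · exact absurd h.symm (inl_ne_inr hp')
  · obtain ⟨hleaf, rfl, -⟩ := isOrigin_inr.1 hp
    obtain ⟨hleaf', rfl, -⟩ := isOrigin_inr.1 hp'
    obtain rfl : b = b' := Subtype.ext (congrArg Prod.fst h)
    have haddr : copyAddr b x = copyAddr b x' := by
      simpa only [posMap, baseAddr, List.append_nil] using congrArg Prod.snd h
    rw [(isCircNet_copyNet b).eq_of_isLeaf hleaf hleaf' haddr]

end netClosure

/-! ### The projection of states -/

namespace SState

variable {S : Struct}

theorem eq_of_f_eq {T T' : SState S} (h : T.f = T'.f) : T = T' := by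
  cases T
  cases T'
  cases h
  rfl

theorem f_eq_none (T : SState S) {p : S.Edge × Addr} (hp : ¬ S.IsOrigin p) : T.f p = none :=
  not_not.1 (mt (T.dom_subset p) hp)

/-- The state `T` with the token of origin `p` put at the position `w`. -/
def update (T : SState S) (p : S.Edge × Addr) (w : Struct.PosVal S) (hp : S.IsOrigin p)
    (hw : S.ValidVal w) : SState S where
  f := Function.update T.f p (some w)
  dom_subset q hq := by
    by_cases h : q = p
    · exact h ▸ hp
    · exact T.dom_subset q (by rwa [Function.update_of_ne h] at hq)
  init_total q hq := by
    by_cases h : q = p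
    · simp [h]
    · rw [Function.update_of_ne h]
      exact T.init_total q hq
  val_valid q v hv := by
    rw [Function.update_apply] at hv
    split_ifs at hv
    · exact Option.some.inj hv ▸ hw
    · exact T.val_valid q v hv

end SState

namespace netClosure

open Struct

variable {R : Struct}

/-- The origin in the closure above a given origin in `R`. -/
noncomputable def liftOrigin {q : R.Edge × Addr} (hq : R.IsOrigin q) :
    (netClosure R).Edge × Addr :=
  (exists_isOrigin_posMap_eq hq).choose

theorem isOrigin_liftOrigin {q : R.Edge × Addr} (hq : R.IsOrigin q) :
    (netClosure R).IsOrigin (liftOrigin hq) :=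
  (exists_isOrigin_posMap_eq hq).choose_spec.1

theorem posMap_liftOrigin {q : R.Edge × Addr} (hq : R.IsOrigin q) : posMap (liftOrigin hq) = q :=
  (exists_isOrigin_posMap_eq hq).choose_spec.2

open Classical in
/-- The projection of the states of the closure to the states of `R`. A token of `R` starting at an
occurrence of `⊥` in a conclusion corresponds to a token which a `one`-link of a copy may not have
spawned yet; in that case its projection stands at its origin. -/
noncomputable def project (T : SState (netClosure R)) : SState R where
  f q := if hq : R.IsOrigin q then
    ((T.f (liftOrigin hq)).map valMap).or ((initState R).f q) else none
  dom_subset q hq := by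
    by_contra h
    exact hq (dif_neg h)
  init_total q hq := by
    rw [dif_pos (show R.IsOrigin q from Or.inl hq), Ne, Option.or_eq_none_iff]
    exact fun h => (initState R).init_total q hq h.2
  val_valid q v hv := by
    split_ifs at hv
    rcases Option.or_eq_some_iff.1 hv with h | ⟨-, h⟩
    · obtain ⟨u, hu, rfl⟩ := Option.map_eq_some_iff.1 h
      exact validVal_valMap (T.val_valid _ u hu)
    · exact (initState R).val_valid q v h

theorem project_posMap (hR : R.WF) (T : SState (netClosure R)) {p : (netClosure R).Edge × Addr}
    (hp : (netClosure R).IsOrigin p) :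
    (project T).f (posMap p) = ((T.f p).map valMap).or ((initState R).f (posMap p)) := by
  have hq := isOrigin_posMap hp
  refine (dif_pos hq).trans ?_
  rw [posMap_injOn hR (isOrigin_liftOrigin hq) hp (posMap_liftOrigin hq)]

theorem project_posMap_of_eq_some (hR : R.WF) {T : SState (netClosure R)}
    {p : (netClosure R).Edge × Addr} {v : PosVal (netClosure R)} (hv : T.f p = some v) :
    (project T).f (posMap p) = some (valMap v) := by
  rw [project_posMap hR T (T.dom_subset p (by simp [hv])), hv, Option.map_some, Option.some_or]

theorem eq_of_forall_posMap {T T' : SState R}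
    (h : ∀ p, (netClosure R).IsOrigin p → T.f (posMap p) = T'.f (posMap p)) : T = T' := by
  refine SState.eq_of_f_eq (funext fun q => ?_)
  by_cases hq : R.IsOrigin q
  · rw [← posMap_liftOrigin hq]
    exact h _ (isOrigin_liftOrigin hq)
  · rw [T.f_eq_none hq, T'.f_eq_none hq]

theorem project_initState (hR : R.WF) : project (initState (netClosure R)) = initState R := by
  refine eq_of_forall_posMap fun p hp => ?_
  rw [project_posMap hR _ hp]
  by_cases hinit : (netClosure R).InitPos p
  · simp only [initState, if_pos hinit, if_pos (initPos_posMap hinit)]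
    rfl
  · simp only [initState, if_neg hinit, Option.map_none, Option.none_or]

theorem project_f_of_update (hR : R.WF) {T T' : SState (netClosure R)}
    {p : (netClosure R).Edge × Addr} {w : PosVal (netClosure R)}
    (hT' : T'.f = Function.update T.f p (some w)) :
    (project T').f = Function.update (project T).f (posMap p) (some (valMap w)) := by
  have hw : T'.f p = some w := by rw [hT', Function.update_self]
  have hp := T'.dom_subset p (by simp [hw])
  funext q
  by_cases hq : R.IsOrigin q
  · rw [← posMap_liftOrigin hq]
    have hq' := isOrigin_liftOrigin hq
    by_cases hqp : liftOrigin hq = p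
    · rw [hqp, Function.update_self, project_posMap_of_eq_some hR hw]
    · rw [Function.update_of_ne (mt (posMap_injOn hR hq' hp) hqp), project_posMap hR _ hq',
        project_posMap hR _ hq', hT', Function.update_of_ne hqp]
  · rw [Function.update_of_ne (fun h => hq (by rw [h]; exact isOrigin_posMap hp)),
      SState.f_eq_none _ hq, SState.f_eq_none _ hq]

theorem project_eq_of_update (hR : R.WF) {T T' : SState (netClosure R)}
    {p : (netClosure R).Edge × Addr} {w : PosVal (netClosure R)}
    (hT' : T'.f = Function.update T.f p (some w))
    (hw : (project T).f (posMap p) = some (valMap w)) : project T' = project T :=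
  SState.eq_of_f_eq (by rw [project_f_of_update hR hT', Function.update_eq_self_iff, hw])

theorem unlocked_project (hR : R.WF) {T : SState (netClosure R)} {b : R.Node} :
    R.Unlocked (project T) b ↔ (netClosure R).Unlocked T (.inl b) := by
  constructor
  · rintro ⟨q, e, i, hq, hb⟩
    have horigin := (project T).dom_subset q (by simp [hq])
    rw [← posMap_liftOrigin horigin, project_posMap hR T (isOrigin_liftOrigin horigin)] at hq
    rcases Option.or_eq_some_iff.1 hq with h | ⟨-, h⟩
    · obtain ⟨v, hv, hvmap⟩ := Option.map_eq_some_iff.1 h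
      cases v with
      | atom => cases hvmap
      | lock e' i' =>
        obtain ⟨e', rfl, -⟩ := exists_of_sort_src_eq_bot (T.val_valid _ _ hv)
        cases hvmap
        exact ⟨_, _, _, hv, congrArg Sum.inl hb⟩
    · simp [initState] at h
  · rintro ⟨p, e, i, hp, hb⟩
    rcases e with e | ⟨c, x⟩
    · exact ⟨_, e, i, project_posMap_of_eq_some hR hp, Sum.inl_injective hb⟩
    · cases hb

theorem active_project (hR : R.WF) {T : SState (netClosure R)} {n : R.Node} :
    R.Active (project T) n ↔ (netClosure R).Active T (.inl n) := by
  simp only [Active, unlocked_project hR]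
  exact Finset.forall_mem_image.symm

theorem active_inr (T : SState (netClosure R)) (c) : (netClosure R).Active T (.inr c) := by
  suffices h : (netClosure R).boxes (.inr c) = ∅ from fun n hn => by
    rw [h] at hn
    exact absurd hn (Finset.notMem_empty n)
  rcases c with ⟨b, n⟩ | b
  · exact congrArg (Finset.image _) ((isCircNet_copyNet b).boxes_eq_empty n)
  · rfl

end netClosure

/-! ### The residual distance of a token -/

namespace netClosure

open Struct

variable {R : Struct}

open Classical in
/-- The number of links outside `R` which a token still has to cross before it enters `R` or comes
to rest on a conclusion of the closure. -/
noncomputable def residual : PosVal (netClosure R) → ℕ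
  | .atom (.inl e) m => if IsCutConcl e ∧ PosOcc (R.typ e) m then m.length + 2 else 0
  | .atom (.inr ⟨b, x⟩) m => (copyNet b).residual (copyAddr b) x m
  | .lock _ _ => 0

theorem residual_inl_eq_zero {e : R.Edge} {m : Addr} :
    residual (.atom (.inl e) m) = 0 ↔ ¬ (IsCutConcl e ∧ PosOcc (R.typ e) m) := by
  rw [residual]
  split_ifs with h <;> simp [h]

theorem residual_inr_eq_zero {b : BadC R} {x : (copyNet b).S.Edge} {m : Addr} :
    residual (.atom (.inr ⟨b, x⟩) m) = 0 ↔
      (copyNet b).IsSide x ∧ m = [] ∧ PosOcc (R.typ b.val) (copyAddr b x) := by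
  rw [← and_congr_right fun hx => posOcc_typ_iff_of_isSide hx, residual, PNet.residual]
  split_ifs <;> simp [*]

theorem eq_of_residual_eq_zero {v w : PosVal (netClosure R)} (hv : (netClosure R).ValidVal v)
    (hw : (netClosure R).ValidVal w) (hv₀ : residual v = 0) (hw₀ : residual w = 0)
    (h : valMap v = valMap w) : v = w := by
  have inl_ne_inr {e m b x k} (he : residual (R := R) (.atom (.inl e) m) = 0)
      (hx : residual (R := R) (.atom (.inr ⟨b, x⟩) k) = 0) :
      valMap (.atom (.inl e) m) ≠ valMap (R := R) (.atom (.inr ⟨b, x⟩) k) := by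
    obtain ⟨-, rfl, hpos⟩ := residual_inr_eq_zero.1 hx
    intro h
    injection h with he' hm
    obtain rfl : e = b.val := he'
    obtain rfl : m = copyAddr b x := hm.trans (List.append_nil _)
    exact residual_inl_eq_zero.1 he ⟨b.property, hpos⟩
  rcases v with ⟨e | ⟨b, x⟩, m⟩ | ⟨e, i⟩ <;> rcases w with ⟨e' | ⟨b', x'⟩, m'⟩ | ⟨e', i'⟩ <;>
    try cases h <;> rfl
  · exact absurd h (inl_ne_inr hv₀ hw₀)
  · exact absurd h.symm (inl_ne_inr hw₀ hv₀)
  · obtain ⟨hside, rfl, -⟩ := residual_inr_eq_zero.1 hv₀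
    obtain ⟨hside', rfl, -⟩ := residual_inr_eq_zero.1 hw₀
    injection h with hb haddr
    obtain rfl : b = b' := Subtype.ext hb
    have haddr' : copyAddr b x = copyAddr b x' := by
      simpa only [baseAddr, List.append_nil] using haddr
    rw [(isCircNet_copyNet b).eq_of_isLeaf (Or.inl hside) (Or.inl hside') haddr']
  · obtain ⟨e, rfl, -⟩ := exists_of_sort_src_eq_bot hv
    obtain ⟨e', rfl, -⟩ := exists_of_sort_src_eq_bot hw
    cases h
    rfl

theorem posOcc_typ_main {b : BadC R} {m : Addr} :
    PosOcc ((copyNet b).S.typ (copyNet b).main) m ↔ NegOcc (R.typ b.val) m := by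
  have hcopy := isCircNet_copyNet b
  rw [hcopy.posOcc_iff_of_not_isSide (fun h => h.2 rfl), hcopy.addr_main, List.nil_append,
    posOcc_dual]

theorem posMap_inr_main (b : BadC R) (m : Addr) :
    posMap (.inr ⟨b, (copyNet b).main⟩, m) = posMap (R := R) (.inl b.val, m) :=
  Prod.ext rfl (congrArg (· ++ m) (isCircNet_copyNet b).addr_main)

theorem residual_inr_main_of_negOcc {b : BadC R} {m : Addr} (h : NegOcc (R.typ b.val) m) :
    residual (.atom (.inr ⟨b, (copyNet b).main⟩) m) = 1 := by
  rw [residual, PNet.residual, if_neg (fun h => h.2 rfl), if_pos (posOcc_typ_main.2 h),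
    (isCircNet_copyNet b).addr_main]
  rfl

theorem residual_inr_main_of_not_negOcc {b : BadC R} {m : Addr} (h : ¬ NegOcc (R.typ b.val) m) :
    residual (.atom (.inr ⟨b, (copyNet b).main⟩) m) = m.length + 1 := by
  rw [residual, PNet.residual, if_neg (fun h => h.2 rfl), if_neg (mt posOcc_typ_main.1 h)]

theorem posMap_eq_and_residual_lt_of_tokenMove
    {c : (Σ b : BadC R, (copyNet b).S.Node) ⊕ BadC R} {v w : PosVal (netClosure R)}
    (h : (netClosure R).TokenMove (.inr c) v w) :
    ∃ p q, v = .atom p.1 p.2 ∧ w = .atom q.1 q.2 ∧ posMap q = posMap p ∧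
      residual w < residual v := by
  rcases c with ⟨b, n⟩ | b
  · obtain ⟨v, w, rfl, rfl, hmove⟩ := (copy b).exists_of_tokenMove h
    obtain ⟨x, m, y, k, rfl, rfl, haddr, hlt⟩ :=
      (isCircNet_copyNet b).addr_eq_and_residual_lt_of_tokenMove hmove
    exact ⟨(_, _), (_, _), rfl, rfl, Prod.ext rfl haddr, hlt⟩
  · cases h with
    | @cutDown _ _ m _ htgt htgt' hne hpos =>
      refine ⟨(_, _), (_, _), rfl, rfl, ?_⟩
      rcases eq_of_tgt_eq_cut htgt with rfl | rfl <;>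
        rcases eq_of_tgt_eq_cut htgt' with rfl | rfl
      · exact absurd rfl hne
      · have hpos' : PosOcc (R.typ b.val) m := hpos
        refine ⟨posMap_inr_main b m, ?_⟩
        rw [residual_inr_main_of_not_negOcc hpos'.not_negOcc, residual, if_pos ⟨b.property, hpos'⟩]
        exact Nat.lt_succ_self _
      · have hneg : NegOcc (R.typ b.val) m := posOcc_typ_main.1 hpos
        refine ⟨(posMap_inr_main b m).symm, ?_⟩
        rw [residual_inr_main_of_negOcc hneg,
          residual_inl_eq_zero.2 fun h => h.2.not_negOcc hneg]
        exact Nat.one_pos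
      · exact absurd rfl hne
    | axUp hn | lock hn | syncDown hn | syncUp hn => cases hn
    | multDown hn | multUp hn => rcases hn with hn | hn <;> cases hn

theorem exists_tokenMove_of_residual_ne_zero {v : PosVal (netClosure R)}
    (hv : (netClosure R).ValidVal v) (h : residual v ≠ 0) :
    ∃ c w, (netClosure R).TokenMove (.inr c) v w := by
  rcases v with ⟨e | ⟨b, x⟩, m⟩ | ⟨e, i⟩
  · obtain ⟨hcut, hpos⟩ := not_not.1 (mt residual_inl_eq_zero.2 h)
    exact ⟨.inr ⟨e, hcut⟩, _, .cutDown rfl (tgt_inl_cutConcl ⟨e, hcut⟩) (tgt_inr_main ⟨e, hcut⟩)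
      Sum.inr_ne_inl hpos⟩
  · by_cases hconcl : PosOcc ((copyNet b).S.typ x) m ∧ (copyNet b).S.tgt x = none
    · by_cases hx : x = (copyNet b).main
      · subst hx
        exact ⟨.inr b, _, .cutDown rfl (tgt_inr_main b) (tgt_inl_cutConcl b) Sum.inl_ne_inr
          hconcl.1⟩
      · have hside : (copyNet b).IsSide x := ⟨hconcl.2, hx⟩
        refine absurd ?_ h
        rw [residual, PNet.residual, if_pos hside, if_pos hconcl.1]
    · obtain ⟨n, w, hmove⟩ := (isCircNet_copyNet b).exists_tokenMove hv hconcl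
      exact ⟨.inl ⟨b, n⟩, _, (copy b).tokenMove_map hmove⟩
  · exact absurd rfl h

theorem validVal_of_tokenMove_inr {c : (Σ b : BadC R, (copyNet b).S.Node) ⊕ BadC R}
    {v w : PosVal (netClosure R)} (h : (netClosure R).TokenMove (.inr c) v w)
    (hv : (netClosure R).ValidVal v) : (netClosure R).ValidVal w := by
  obtain ⟨⟨e, m⟩, ⟨e', k⟩, rfl, rfl, hpos, -⟩ := posMap_eq_and_residual_lt_of_tokenMove h
  obtain ⟨hedge, haddr⟩ := Prod.ext_iff.1 hpos
  refine (atomOcc_typ_iff e' k).2 ?_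
  rw [show baseEdge e' = baseEdge e from hedge, show baseAddr e' ++ k = baseAddr e ++ m from haddr]
  exact (atomOcc_typ_iff e m).1 hv

theorem residual_map_inl_of_tokenMove {n : R.Node} {v w : PosVal R} (h : R.TokenMove n v w) :
    residual (v.map (inl R).edge) = 0 := by
  cases v with
  | atom e m =>
    exact residual_inl_eq_zero.2 fun ⟨hcut, hpos⟩ =>
      Option.some_ne_none n ((h.tgt_eq_some_of_posOcc hpos).symm.trans hcut.1)
  | lock => rfl

theorem finPos_iff {p : (netClosure R).Edge × Addr} :
    (netClosure R).FinPos p ↔ R.FinPos (posMap p) ∧ residual (.atom p.1 p.2) = 0 := by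
  rcases p with ⟨e | ⟨b, x⟩, m⟩
  · rw [residual_inl_eq_zero]
    exact ⟨fun ⟨htgt, hpos⟩ => ⟨⟨(tgt_inl_eq_none.1 htgt).1, hpos⟩,
        fun h => (tgt_inl_eq_none.1 htgt).2 h.1⟩,
      fun ⟨⟨htgt, hpos⟩, h⟩ => ⟨tgt_inl_eq_none.2 ⟨htgt, fun hcut => h ⟨hcut, hpos⟩⟩, hpos⟩⟩
  · rw [residual_inr_eq_zero]
    constructor
    · rintro ⟨htgt, hpos⟩
      have hside := tgt_inr_eq_none.1 htgt
      obtain ⟨rfl, hpos'⟩ := (posOcc_typ_iff_of_isSide hside).1 hpos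
      exact ⟨⟨b.property.1, by rwa [posMap, List.append_nil]⟩, hside, rfl, hpos'⟩
    · rintro ⟨-, hside, hpos⟩
      exact ⟨tgt_inr_eq_none.2 hside, (posOcc_typ_iff_of_isSide hside).2 hpos⟩

theorem exists_finPos_posMap_eq {q : R.Edge × Addr} (hq : R.FinPos q) :
    ∃ p, (netClosure R).FinPos p ∧ posMap p = q := by
  suffices h : ∃ p, posMap p = q ∧ residual (.atom p.1 p.2) = 0 by
    obtain ⟨p, rfl, hres⟩ := h
    exact ⟨p, finPos_iff.2 ⟨hq, hres⟩, rfl⟩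
  obtain ⟨e, m⟩ := q
  by_cases hcut : IsCutConcl e
  · obtain ⟨x, hside | hone, rfl⟩ :=
      (isCircNet_copyNet ⟨e, hcut⟩).exists_isLeaf hq.2.atomOcc.dual
    · exact ⟨(.inr ⟨⟨e, hcut⟩, x⟩, []), Prod.ext rfl (List.append_nil _),
        residual_inr_eq_zero.2 ⟨hside, rfl, hq.2⟩⟩
    · exact absurd (negOcc_copyAddr_of_sort_one hone) hq.2.not_negOcc
  · exact ⟨(.inl e, m), rfl, residual_inl_eq_zero.2 fun h => hcut h.1⟩

end netClosure

theorem Struct.finite_setOf_isOrigin (S : Struct) : {p | S.IsOrigin p}.Finite := by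
  have hfin : (⋃ e : S.Edge, Prod.mk e '' {m | AtomOcc (S.typ e) m}).Finite :=
    Set.finite_iUnion fun e => (finite_setOf_atomOcc (S.typ e)).image _
  refine (hfin.union (Set.finite_range fun e : S.Edge => (e, ([] : Addr)))).subset ?_
  rintro ⟨e, m⟩ (⟨-, hneg⟩ | ⟨-, rfl⟩)
  · exact Or.inl (Set.mem_iUnion.2 ⟨e, m, hneg.atomOcc, rfl⟩)
  · exact Or.inr ⟨e, rfl⟩

namespace netClosure

open Struct

variable {R : Struct} {T T' : SState (netClosure R)}

/-- The number of links outside `R` which the token of origin `p` still has to cross before it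
enters `R` or comes to rest on a conclusion. A token which a copy has yet to spawn counts for one
more than it will at its origin. -/
noncomputable def pending (T : SState (netClosure R)) (p : (netClosure R).Edge × Addr) : ℕ :=
  match T.f p, p.1 with
  | some v, _ => residual v
  | none, .inl _ => 0
  | none, .inr ⟨b, x⟩ => (copyAddr b x).length + 2

theorem pending_of_eq_some {p : (netClosure R).Edge × Addr} {v : PosVal (netClosure R)}
    (h : T.f p = some v) : pending T p = residual v := by
  rw [pending, h]

theorem pending_congr {p : (netClosure R).Edge × Addr} (h : T'.f p = T.f p) :
    pending T' p = pending T p := by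
  rw [pending, pending, h]

theorem pending_inl_of_eq_none {e : R.Edge} {m : Addr} (h : T.f (.inl e, m) = none) :
    pending T (.inl e, m) = 0 := by
  rw [pending, h]

theorem pending_inr_of_eq_none {b : BadC R} {x : (copyNet b).S.Edge} {m : Addr}
    (h : T.f (.inr ⟨b, x⟩, m) = none) :
    pending T (.inr ⟨b, x⟩, m) = (copyAddr b x).length + 2 := by
  rw [pending, h]

/-- The total number of pending moves, the variant of the moves outside `R`. -/
noncomputable def totalPending (T : SState (netClosure R)) : ℕ :=
  ∑ p ∈ (finite_setOf_isOrigin (netClosure R)).toFinset, pending T p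

/-- A state of the closure is settled if no token has a move outside `R` left to make. -/
def Settled (T : SState (netClosure R)) : Prop :=
  ∀ p, (netClosure R).IsOrigin p → pending T p = 0

theorem totalPending_lt_of_update {p : (netClosure R).Edge × Addr} {w : PosVal (netClosure R)}
    (hT' : T'.f = Function.update T.f p (some w)) (hlt : residual w < pending T p) :
    totalPending T' < totalPending T := by
  have hw : T'.f p = some w := by rw [hT', Function.update_self]
  have hp := T'.dom_subset p (by simp [hw])
  have hpend : pending T' p < pending T p := by rwa [pending_of_eq_some hw]
  refine Finset.sum_lt_sum (fun q _ => ?_) ⟨p, (Set.Finite.mem_toFinset _).2 hp, hpend⟩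
  by_cases hq : q = p
  · exact hq ▸ hpend.le
  · exact (pending_congr (by rw [hT', Function.update_of_ne hq])).le

theorem posOcc_of_sort_one {b : BadC R} {x : (copyNet b).S.Edge}
    (hx : (copyNet b).S.sort ((copyNet b).S.src x) = .one) : PosOcc ((copyNet b).S.typ x) [] :=
  ⟨_, sub_nil _, Or.inl ((isCircNet_copyNet b).typ_eq_of_sort_one hx)⟩

theorem pending_spawn {b : BadC R} {x : (copyNet b).S.Edge}
    (hx : (copyNet b).S.sort ((copyNet b).S.src x) = .one) (h : T.f (.inr ⟨b, x⟩, []) = none) :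
    residual (.atom (.inr ⟨b, x⟩) []) < pending T (.inr ⟨b, x⟩, []) := by
  rw [pending_inr_of_eq_none h, residual, PNet.residual, if_neg (not_isSide_of_sort_one hx),
    if_pos (posOcc_of_sort_one hx)]
  exact Nat.lt_succ_self _

/-! ### Every transition of the closure is silent or projects to a transition of `R` -/

theorem sort_inr_ne_sync (c : (Σ b : BadC R, (copyNet b).S.Node) ⊕ BadC R) :
    (netClosure R).sort (.inr c) ≠ .sync := by
  intro hc
  rcases c with ⟨b, n⟩ | b
  · rcases (isCircNet_copyNet b).sort_cases n with h | h | h | h <;> cases h.symm.trans hc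
  · cases hc

theorem project_eq_of_tokenMove_inr (hR : R.WF)
    {c : (Σ b : BadC R, (copyNet b).S.Node) ⊕ BadC R} {p : (netClosure R).Edge × Addr}
    {v w : PosVal (netClosure R)} (hmove : (netClosure R).TokenMove (.inr c) v w)
    (hv : T.f p = some v) (hT' : T'.f = Function.update T.f p (some w)) :
    project T' = project T ∧ totalPending T' < totalPending T := by
  obtain ⟨u, u', rfl, rfl, hpos, hlt⟩ := posMap_eq_and_residual_lt_of_tokenMove hmove
  refine ⟨project_eq_of_update hR hT' ?_, totalPending_lt_of_update hT' ?_⟩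
  · obtain ⟨hedge, haddr⟩ := Prod.ext_iff.1 hpos
    exact (project_posMap_of_eq_some hR hv).trans
      (congrArg some (congrArg₂ PosVal.atom hedge.symm haddr.symm))
  · rwa [pending_of_eq_some hv]

theorem project_eq_of_spawn_inr (hR : R.WF) {b : BadC R} {x : (copyNet b).S.Edge}
    (hone : (copyNet b).S.sort ((copyNet b).S.src x) = .one) (hnone : T.f (.inr ⟨b, x⟩, []) = none)
    (hT' : T'.f = Function.update T.f (.inr ⟨b, x⟩, []) (some (.atom (.inr ⟨b, x⟩) []))) :
    project T' = project T ∧ totalPending T' < totalPending T := by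
  have horigin : (netClosure R).IsOrigin (.inr ⟨b, x⟩, []) :=
    Or.inr ⟨hone, rfl⟩
  refine ⟨project_eq_of_update hR hT' ?_, totalPending_lt_of_update hT' (pending_spawn hone hnone)⟩
  rw [project_posMap hR T horigin, hnone]
  exact if_pos (initPos_posMap_inr horigin)

theorem project_soloTrans (hR : R.WF) (h : SoloTrans T T') :
    (project T' = project T ∧ totalPending T' < totalPending T) ∨
      SoloTrans (project T) (project T') := by
  obtain ⟨p, n | c, v, w, hsort, hact, hmove, hv, hT'⟩ := h
  · obtain ⟨v, w, rfl, rfl, hmoveR⟩ := (inl R).exists_of_tokenMove hmove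
    refine Or.inr ⟨posMap p, n, v, w, hsort, (active_project hR).2 hact, hmoveR, ?_, ?_⟩
    · rw [project_posMap_of_eq_some hR hv, valMap_map_inl]
    · rw [project_f_of_update hR hT', valMap_map_inl]
  · exact Or.inl (project_eq_of_tokenMove_inr hR hmove hv hT')

theorem project_spawnTrans (hR : R.WF) (h : SpawnTrans T T') :
    (project T' = project T ∧ totalPending T' < totalPending T) ∨
      SpawnTrans (project T) (project T') := by
  obtain ⟨e | ⟨b, x⟩, hone, hact, hnone, hT'⟩ := h
  · refine Or.inr ⟨e, hone, (active_project hR).2 hact, ?_, project_f_of_update hR hT'⟩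
    refine (project_posMap hR T (p := (.inl e, [])) (Or.inr ⟨hone, rfl⟩)).trans ?_
    rw [hnone]
    exact if_neg (OnePos.not_initPos hR (p := (e, [])) ⟨hone, rfl⟩)
  · exact Or.inl (project_eq_of_spawn_inr hR hone hnone hT')

theorem project_syncTrans (hR : R.WF)
    (hinj : ∀ p q v, (project T).f p = some v → (project T).f q = some v → p = q)
    (h : SyncTrans T T') : SyncTrans (project T) (project T') := by
  obtain ⟨l | c, hl, hact, ⟨p, e, m, hp, he⟩, hsat, hmove, hrest⟩ := h
  · obtain ⟨e, rfl, heR⟩ := (inl R).exists_of_syncInEdge he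
    refine ⟨l, hl, (active_project hR).2 hact, ⟨_, e, m, project_posMap_of_eq_some hR hp, heR⟩,
      fun e m he hm => ?_, fun q e m hq he => ?_, fun q hq => ?_⟩
    · obtain ⟨p, hp⟩ := hsat _ m ((inl R).syncInEdge_edge he) hm
      exact ⟨_, project_posMap_of_eq_some hR hp⟩
    · -- By injectivity the token is the one found in `R` itself, not one still inside a copy.
      have he' := (inl R).syncInEdge_edge he
      obtain ⟨p, hp⟩ := hsat _ m he' ((project T).val_valid q _ hq)
      obtain rfl := hinj _ _ _ (project_posMap_of_eq_some hR hp) hq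
      obtain ⟨w', hw', hpw⟩ := hmove p _ m hp he'
      obtain ⟨v, w, hv, rfl, hvw⟩ := (inl R).exists_of_tokenMove hw'
      obtain rfl : v = .atom e m := (valMap_map_inl v).symm.trans (congrArg valMap hv)
      exact ⟨w, hvw, (project_posMap_of_eq_some hR hpw).trans (congrArg some (valMap_map_inl w))⟩
    · by_cases hq' : R.IsOrigin q
      · obtain ⟨p, hp, rfl⟩ := exists_isOrigin_posMap_eq hq'
        have hpT : T'.f p = T.f p := hrest p fun e m hv he => by
          obtain ⟨e, rfl, heR⟩ := (inl R).exists_of_syncInEdge he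
          exact hq e m (project_posMap_of_eq_some hR hv) heR
        rw [project_posMap hR _ hp, project_posMap hR _ hp, hpT]
      · rw [SState.f_eq_none _ hq', SState.f_eq_none _ hq']
  · exact absurd hl (sort_inr_ne_sync c)

theorem project_strans (hR : R.WF)
    (hinj : ∀ p q v, (project T).f p = some v → (project T).f q = some v → p = q)
    (h : STrans (netClosure R) T T') :
    (project T' = project T ∧ totalPending T' < totalPending T) ∨
      STrans R (project T) (project T') := by
  rcases strans_iff.1 h with h | h | h
  · exact (project_soloTrans hR h).imp_right strans_of_soloTrans
  · exact (project_spawnTrans hR h).imp_right strans_of_spawnTrans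
  · exact Or.inr (strans_of_syncTrans (project_syncTrans hR hinj h))

theorem reach_project (hR : R.WF)
    (h : ReflTransGen (STrans (netClosure R)) (initState (netClosure R)) T) :
    ReflTransGen (STrans R) (initState R) (project T) := by
  induction h with
  | refl => rw [project_initState hR]
  | tail _ hstep ih =>
    rcases project_strans hR (fun _ _ _ => eq_of_reach hR ih) hstep with ⟨h, -⟩ | h
    · rwa [h]
    · exact ih.tail h

/-! ### Settling -/

theorem exists_silent_strans (hR : R.WF) (hT : ¬ Settled T) :
    ∃ T', STrans (netClosure R) T T' ∧ project T' = project T ∧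
      totalPending T' < totalPending T := by
  obtain ⟨p, hp, hpend⟩ : ∃ p, (netClosure R).IsOrigin p ∧ pending T p ≠ 0 := by
    simpa only [Settled, not_forall, exists_prop] using hT
  cases hv : T.f p with
  | some v =>
    have hvalid := T.val_valid p v hv
    obtain ⟨c, w, hmove⟩ :=
      exists_tokenMove_of_residual_ne_zero hvalid (pending_of_eq_some hv ▸ hpend)
    exact ⟨T.update p w hp (validVal_of_tokenMove_inr hmove hvalid),
      strans_of_soloTrans ⟨p, _, v, w, sort_inr_ne_sync c, active_inr T c, hmove, hv, rfl⟩,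
      project_eq_of_tokenMove_inr hR hmove hv rfl⟩
  | none =>
    have hone : (netClosure R).OnePos p := hp.resolve_left fun h => T.init_total p h hv
    obtain ⟨e | ⟨b, x⟩, m⟩ := p
    · exact absurd (pending_inl_of_eq_none hv) hpend
    · obtain ⟨hsort, rfl⟩ := hone
      have hvalid : (netClosure R).ValidVal (.atom (.inr ⟨b, x⟩) []) :=
        (posOcc_of_sort_one hsort).atomOcc
      exact ⟨T.update _ _ hp hvalid,
        strans_of_spawnTrans ⟨_, hsort, active_inr T _, hv, rfl⟩,
        project_eq_of_spawn_inr hR hsort hv rfl⟩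

theorem exists_settled (hR : R.WF) (T : SState (netClosure R)) :
    ∃ T', ReflTransGen (STrans (netClosure R)) T T' ∧ project T' = project T ∧ Settled T' := by
  induction hn : totalPending T using Nat.strong_induction_on generalizing T with
  | _ n ih =>
    by_cases hT : Settled T
    · exact ⟨T, .refl, rfl, hT⟩
    · obtain ⟨T₁, hstep, hproj, hlt⟩ := exists_silent_strans hR hT
      obtain ⟨T₂, hreach, hproj', hset⟩ := ih _ (hn ▸ hlt) T₁ rfl
      exact ⟨T₂, .head hstep hreach, hproj'.trans hproj, hset⟩

end netClosure

namespace netClosure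

open Struct

variable {R : Struct} {T : SState (netClosure R)} {S : SState R}

/-! ### Every transition of `R` lifts to a transition from a settled state -/

open Classical in
/-- The state obtained from `T` by moving every token whose projection differs in `S` to its
position in `S`. -/
noncomputable def lift (T : SState (netClosure R)) (S : SState R) : SState (netClosure R) where
  f p := if (netClosure R).IsOrigin p ∧ S.f (posMap p) ≠ (project T).f (posMap p) then
    (S.f (posMap p)).map (PosVal.map (inl R).edge) else T.f p
  dom_subset p hp := by
    by_contra h
    rw [if_neg fun hp' => h hp'.1] at hp
    exact h (T.dom_subset p hp)
  init_total p hp := by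
    split_ifs
    · exact mt Option.map_eq_none_iff.1 (S.init_total _ (initPos_posMap hp))
    · exact T.init_total p hp
  val_valid p v hv := by
    split_ifs at hv
    · obtain ⟨u, hu, rfl⟩ := Option.map_eq_some_iff.1 hv
      exact validVal_map_inl (S.val_valid _ u hu)
    · exact T.val_valid p v hv

theorem lift_f_of_f_posMap_eq {p : (netClosure R).Edge × Addr}
    (h : (netClosure R).IsOrigin p → S.f (posMap p) = (project T).f (posMap p)) :
    (lift T S).f p = T.f p :=
  if_neg fun hp => hp.2 (h hp.1)

theorem lift_f_of_f_eq {p : (netClosure R).Edge × Addr} (hp : (netClosure R).IsOrigin p)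
    (h : T.f p = ((project T).f (posMap p)).map (PosVal.map (inl R).edge)) :
    (lift T S).f p = (S.f (posMap p)).map (PosVal.map (inl R).edge) := by
  by_cases hS : S.f (posMap p) = (project T).f (posMap p)
  · rw [lift_f_of_f_posMap_eq fun _ => hS, h, hS]
  · exact if_pos ⟨hp, hS⟩

theorem lift_f_of_update (hR : R.WF) {p : (netClosure R).Edge × Addr} {w : PosVal R}
    (hp : (netClosure R).IsOrigin p)
    (h : T.f p = ((project T).f (posMap p)).map (PosVal.map (inl R).edge))
    (hS : S.f = Function.update (project T).f (posMap p) (some w)) :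
    (lift T S).f = Function.update T.f p (some (w.map (inl R).edge)) := by
  refine Function.eq_update_iff.2 ⟨?_, fun q hq => lift_f_of_f_posMap_eq fun hq' => ?_⟩
  · rw [lift_f_of_f_eq hp h, hS, Function.update_self, Option.map_some]
  · rw [hS, Function.update_of_ne (mt (posMap_injOn hR hq' hp) hq)]

theorem project_lift (hR : R.WF) : project (lift T S) = S := by
  refine eq_of_forall_posMap fun p hp => ?_
  rw [project_posMap hR _ hp]
  by_cases hS : S.f (posMap p) = (project T).f (posMap p)
  · rw [lift_f_of_f_posMap_eq fun _ => hS, ← project_posMap hR _ hp, hS]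
  · rw [show (lift T S).f p = _ from if_pos ⟨hp, hS⟩]
    cases hv : S.f (posMap p) with
    | some v => exact congrArg some (valMap_map_inl v)
    | none => exact if_neg fun h => S.init_total _ h hv

theorem Settled.residual_eq_zero (hT : Settled T) {p : (netClosure R).Edge × Addr}
    {v : PosVal (netClosure R)} (hv : T.f p = some v) : residual v = 0 :=
  (pending_of_eq_some hv).symm.trans (hT p (T.dom_subset p (by simp [hv])))

theorem Settled.exists_f_eq_some (hR : R.WF) (hT : Settled T) {p : (netClosure R).Edge × Addr}
    (hp : (netClosure R).IsOrigin p) {v : PosVal R} (hv : (project T).f (posMap p) = some v) :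
    ∃ u, T.f p = some u ∧ valMap u = v := by
  cases hu : T.f p with
  | some u => exact ⟨u, rfl, Option.some.inj ((project_posMap_of_eq_some hR hu).symm.trans hv)⟩
  | none =>
    exfalso
    rcases p with ⟨e | ⟨b, x⟩, m⟩
    · have hone : R.OnePos (e, m) := hp.resolve_left fun h => T.init_total _ h hu
      rw [project_posMap hR T hp, hu] at hv
      exact Option.some_ne_none v (hv.symm.trans (if_neg (hone.not_initPos hR)))
    · exact absurd (hT _ hp) (by rw [pending_inr_of_eq_none hu]; exact Nat.succ_ne_zero _)

theorem Settled.f_eq_map_inl (hR : R.WF) (hT : Settled T) {p : (netClosure R).Edge × Addr}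
    (hp : (netClosure R).IsOrigin p) {n : R.Node} {v w : PosVal R} (hmove : R.TokenMove n v w)
    (hv : (project T).f (posMap p) = some v) : T.f p = some (v.map (inl R).edge) := by
  obtain ⟨u, hu, rfl⟩ := hT.exists_f_eq_some hR hp hv
  have hvalid := T.val_valid p u hu
  exact hu.trans (congrArg some (eq_of_residual_eq_zero hvalid
    (validVal_map_inl (validVal_valMap hvalid)) (hT.residual_eq_zero hu)
    (residual_map_inl_of_tokenMove hmove) (valMap_map_inl _).symm))

theorem soloTrans_lift (hR : R.WF) (hT : Settled T) (h : SoloTrans (project T) S) :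
    SoloTrans T (lift T S) := by
  obtain ⟨q, n, v, w, hsort, hact, hmove, hv, hS⟩ := h
  obtain ⟨p, hp, rfl⟩ := exists_isOrigin_posMap_eq ((project T).dom_subset q (by simp [hv]))
  have hpv := hT.f_eq_map_inl hR hp hmove hv
  exact ⟨p, .inl n, _, _, hsort, (active_project hR).1 hact, (inl R).tokenMove_map hmove, hpv,
    lift_f_of_update hR hp (by rw [hpv, hv, Option.map_some]) hS⟩

theorem spawnTrans_lift (hR : R.WF) (h : SpawnTrans (project T) S) : SpawnTrans T (lift T S) := by
  obtain ⟨e, hone, hact, hnone, hS⟩ := h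
  have hp : (netClosure R).IsOrigin (.inl e, []) := Or.inr ⟨hone, rfl⟩
  have hnone' : (project T).f (posMap (.inl e, [])) = none := hnone
  have hpnone : T.f (.inl e, []) = none := by
    by_contra h
    obtain ⟨v, hv⟩ := Option.ne_none_iff_exists'.1 h
    simp [project_posMap_of_eq_some hR hv] at hnone'
  exact ⟨.inl e, hone, (active_project hR).1 hact, hpnone,
    lift_f_of_update hR hp (by rw [hpnone, hnone', Option.map_none]) hS⟩

theorem syncTrans_lift (hR : R.WF) (hT : Settled T) (h : SyncTrans (project T) S) :
    SyncTrans T (lift T S) := by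
  obtain ⟨l, hl, hact, ⟨q, e, m, hq, he⟩, hsat, hmove, hrest⟩ := h
  have f_eq {p e m} (hp : (netClosure R).IsOrigin p)
      (hv : (project T).f (posMap p) = some (.atom e m)) (he : R.SyncInEdge l e) :
      T.f p = some (.atom (.inl e) m) := by
    obtain ⟨w, hw, -⟩ := hmove _ e m hv he
    exact hT.f_eq_map_inl hR hp hw hv
  have exists_f_eq {q e m} (hv : (project T).f q = some (.atom e m)) (he : R.SyncInEdge l e) :
      ∃ p, T.f p = some (.atom (.inl e) m) := by
    obtain ⟨p, hp, rfl⟩ := exists_isOrigin_posMap_eq ((project T).dom_subset q (by simp [hv]))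
    exact ⟨p, f_eq hp hv he⟩
  obtain ⟨p₀, hp₀⟩ := exists_f_eq hq he
  refine ⟨.inl l, hl, (active_project hR).1 hact, ⟨p₀, _, m, hp₀, (inl R).syncInEdge_edge he⟩,
    fun e' m he' hm => ?_, fun p e' m hp he' => ?_,
    fun p hp => lift_f_of_f_posMap_eq fun hp' => ?_⟩
  · obtain ⟨e, rfl, heR⟩ := (inl R).exists_of_syncInEdge he'
    obtain ⟨q, hq⟩ := hsat e m heR hm
    exact exists_f_eq hq heR
  · obtain ⟨e, rfl, heR⟩ := (inl R).exists_of_syncInEdge he'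
    have hv := project_posMap_of_eq_some hR hp
    obtain ⟨w, hw, hS⟩ := hmove _ e m hv heR
    refine ⟨_, (inl R).tokenMove_map hw, ?_⟩
    rw [lift_f_of_f_eq (T.dom_subset p (by simp [hp])) (by rw [hp, hv]; rfl), hS, Option.map_some]
  · exact hrest _ fun e m hv he => hp _ m (f_eq hp' hv he) ((inl R).syncInEdge_edge he)

theorem strans_lift (hR : R.WF) (hT : Settled T) (h : STrans R (project T) S) :
    STrans (netClosure R) T (lift T S) := by
  rcases strans_iff.1 h with h | h | h
  · exact strans_of_soloTrans (soloTrans_lift hR hT h)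
  · exact strans_of_spawnTrans (spawnTrans_lift hR h)
  · exact strans_of_syncTrans (syncTrans_lift hR hT h)

theorem exists_settled_of_reach (hR : R.WF) (hS : ReflTransGen (STrans R) (initState R) S) :
    ∃ T, ReflTransGen (STrans (netClosure R)) (initState (netClosure R)) T ∧ project T = S ∧
      Settled T := by
  induction hS with
  | refl =>
    obtain ⟨T, hreach, hproj, hset⟩ := exists_settled hR (initState (netClosure R))
    exact ⟨T, hreach, hproj.trans (project_initState hR), hset⟩
  | @tail _ S' _ hstep ih =>
    obtain ⟨T, hreach, rfl, hset⟩ := ih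
    obtain ⟨T', hreach', hproj, hset'⟩ := exists_settled hR (lift T S')
    exact ⟨T', (hreach.tail (strans_lift hR hset hstep)).trans hreach',
      hproj.trans (project_lift hR), hset'⟩

end netClosure

/-! ### Final states -/

namespace netClosure

open Struct

variable {R : Struct} {T : SState (netClosure R)}

theorem isFinal_valMap_iff {v : PosVal (netClosure R)} (hv : residual v = 0) :
    ((∃ e m, valMap v = .atom e m ∧ R.FinPos (e, m)) ∨ ∃ e i, valMap v = .lock e i) ↔
      (∃ e m, v = .atom e m ∧ (netClosure R).FinPos (e, m)) ∨ ∃ e i, v = .lock e i := by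
  cases v with
  | atom e m =>
    have hfin : (netClosure R).FinPos (e, m) ↔ R.FinPos (posMap (e, m)) :=
      finPos_iff.trans (and_iff_left hv)
    simpa [valMap, posMap] using hfin.symm
  | lock e i => simp [valMap]

theorem Settled.final_project_iff (hR : R.WF) (hT : Settled T) :
    (project T).Final ↔ T.Final := by
  refine and_congr ⟨fun h p v hv => ?_, fun h q v hv => ?_⟩
    ⟨fun h e m hfin => ?_, fun h e m hfin => ?_⟩
  · exact (isFinal_valMap_iff (hT.residual_eq_zero hv)).1 (h _ _ (project_posMap_of_eq_some hR hv))
  · obtain ⟨p, hp, rfl⟩ := exists_isOrigin_posMap_eq ((project T).dom_subset q (by simp [hv]))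
    obtain ⟨u, hu, rfl⟩ := hT.exists_f_eq_some hR hp hv
    exact (isFinal_valMap_iff (hT.residual_eq_zero hu)).2 (h p u hu)
  · obtain ⟨hfinR, hres⟩ := finPos_iff.1 hfin
    obtain ⟨q, hq⟩ := h _ _ hfinR
    obtain ⟨p, hp, rfl⟩ := exists_isOrigin_posMap_eq ((project T).dom_subset q (by simp [hq]))
    obtain ⟨u, hu, huv⟩ := hT.exists_f_eq_some hR hp hq
    exact ⟨p, hu.trans (congrArg some (eq_of_residual_eq_zero (T.val_valid p u hu)
      hfin.2.atomOcc (hT.residual_eq_zero hu) hres huv))⟩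
  · obtain ⟨⟨e', m'⟩, hfin', hpos⟩ := exists_finPos_posMap_eq hfin
    cases hpos
    obtain ⟨p, hp⟩ := h e' m' hfin'
    exact ⟨_, project_posMap_of_eq_some hR hp⟩

theorem Settled.not_totalPending_lt (hT : Settled T) (n : ℕ) : ¬ n < totalPending T := by
  have h : totalPending T = 0 :=
    Finset.sum_eq_zero fun p hp =>
      hT p ((finite_setOf_isOrigin (netClosure R)).mem_toFinset.1 hp)
  omega

theorem deadlockFree_iff_forall_settled (hR : R.WF) :
    DeadlockFree (netClosure R) ↔
      ∀ T, ReflTransGen (STrans (netClosure R)) (initState (netClosure R)) T → Settled T →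
        (∀ S, ¬ STrans R (project T) S) → (project T).Final := by
  constructor
  · intro h T hreach hT hmax
    have hreach' := reach_project hR hreach
    refine (hT.final_project_iff hR).2 (h T hreach fun T' hstep => ?_)
    rcases project_strans hR (fun _ _ _ => eq_of_reach hR hreach') hstep with ⟨-, hlt⟩ | hstep'
    · exact hT.not_totalPending_lt _ hlt
    · exact hmax _ hstep'
  · intro h T hreach hmax
    have hT : Settled T := by
      by_contra hT
      obtain ⟨T', hstep, -⟩ := exists_silent_strans hR hT
      exact hmax T' hstep
    refine (hT.final_project_iff hR).1 (h T hreach hT fun S hstep => ?_)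
    exact hmax _ (strans_lift hR hT hstep)

end netClosure

theorem siam_closure_deadlock_free_general (R : Struct) (hWF : R.WF) :
    DeadlockFree R ↔ DeadlockFree (netClosure R) := by
  rw [netClosure.deadlockFree_iff_forall_settled hWF]
  constructor
  · exact fun h T hreach _ => h (netClosure.project T) (netClosure.reach_project hWF hreach)
  · intro h S hreach
    obtain ⟨T, hreachT, rfl, hT⟩ := netClosure.exists_settled_of_reach hWF hreach
    exact h T hreachT hT

/-- **Deadlock freedom and closures.**  The SIAM machine of an SMLL net `R`
is deadlock-free if and only if the SIAM machine of its closure `R̂` (each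
`⊥`-containing conclusion `A` of `R` is cut against the main conclusion of
the net `R°(A⊥)`) is deadlock-free. -/
theorem siam_closure_deadlock_free (R : Struct) (hWF : R.WF) (hC : R.Correct) :
    DeadlockFree R ↔ DeadlockFree (netClosure R) :=
  siam_closure_deadlock_free_general R hWF
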